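/- Let X ⊂ P^N be an algebraic variety of dimension n and degree Δ over ℂ. Let m > Δ be an integer and let c⃗ = (c_0,…,c_N) ∈ ℝ^{N+1}_{≥0}. Then (1/(m·H_X(m)))·S_X(m, c⃗) ≥ (1/((n+1)Δ))·e_X(c⃗) − ((2n+1)Δ/m)·max_{0≤i≤N} c_i. -/

import Mathlib

open scoped BigOperators

noncomputable section

variable {k : ℕ}

/-- The image of the space of homogeneous polynomials of degree `m` in the homogeneous
coordinate ring `ℂ[y]/I`: the degree-`m` graded piece of the coordinate ring of the
projective variety with homogeneous ideal `I`. -/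
def gradedPiece (I : Ideal (MvPolynomial (Fin k) ℂ)) (m : ℕ) :
    Submodule ℂ (MvPolynomial (Fin k) ℂ ⧸ Submodule.restrictScalars ℂ I) :=
  Submodule.map (Submodule.restrictScalars ℂ I).mkQ
    (MvPolynomial.homogeneousSubmodule (Fin k) ℂ m)

/-- The Hilbert function `H_X(m) = dim_ℂ ℂ[y]_m/(I_X)_m` of the projective variety
`X ⊂ ℙ^{k-1}` with homogeneous ideal `I = I_X`. -/
def hilbertFn (I : Ideal (MvPolynomial (Fin k) ℂ)) (m : ℕ) : ℕ :=
  Module.finrank ℂ (gradedPiece I m)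

/-- `A` is a set of exponent vectors of monomials of degree `m` whose residue classes
modulo `I` form a basis of `ℂ[y]_m/(I)_m`. -/
def IsMonomialBasis (I : Ideal (MvPolynomial (Fin k) ℂ)) (m : ℕ)
    (A : Finset (Fin k →₀ ℕ)) : Prop :=
  (∀ a ∈ A, (∑ i, a i) = m) ∧
  LinearIndependent (ι := (A : Set (Fin k →₀ ℕ))) ℂ
    (fun a => (Submodule.restrictScalars ℂ I).mkQ (MvPolynomial.monomial a.1 (1 : ℂ))) ∧
  Submodule.span ℂ
      ((fun a => (Submodule.restrictScalars ℂ I).mkQ (MvPolynomial.monomial a (1 : ℂ))) '' A)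
    = gradedPiece I m

/-- The `m`-th Hilbert weight of the variety with homogeneous ideal `I` with respect to
the weight vector `c`:
`S_X(m, c⃗) = max Σ_{i=1}^{H_X(m)} a⃗^{(i)}·c⃗`, the maximum being over all sets of
monomials `y^{a⃗^{(1)}},…,y^{a⃗^{(H_X(m))}}` whose residue classes modulo `I` form a
basis of `ℂ[y]_m/(I)_m`. -/
def hilbertWeight (I : Ideal (MvPolynomial (Fin k) ℂ)) (m : ℕ) (c : Fin k → ℝ) : ℝ :=
  sSup {s : ℝ | ∃ A : Finset (Fin k →₀ ℕ), IsMonomialBasis I m A ∧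
    s = ∑ a ∈ A, ∑ i, (a i : ℝ) * c i}

end

open Filter

/-!
Order the exponent vectors by weight `∑ i, a i * c i`, with ties broken lexicographically. The
monomials that modulo `I` are not combinations of larger monomials of the same degree form, in each
degree, a monomial basis of maximal weight, and their exponent vectors form a lower set `D`. So both
the Hilbert function and the Hilbert weight are sums over the slice `|a| = m` of `D`.

Up to a set of lower-dimensional growth, `D` is a union of at most `Δ` coordinate cones of dimension
`n + 1`. The slice of such a cone with free coordinates `T` has weight at least the sum of `c i` for
`i ∈ T` times a binomial coefficient, while `e` is at most the sum of these sums over all the cones.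
The overlaps are handled by Bonferroni's inequality. The apex `b` of a cone satisfies `|b| < Δ`,
because lowering `b` inside `D` yields at least `|b| + 1` parallel cones. This bounds the Hilbert
weight below by a multiple of `e`, minus a multiple of `Δ ^ 2`.

For the upper bound on the Hilbert function, take a Noether normalization of the coordinate ring by
linear forms. A linear form `u` that is a primitive element has degree `Δ` over it, and pairing with
`1, u, …, u ^ (Δ - 1)` under the trace embeds the coordinate ring in `Δ` copies of the polynomial
ring, with degrees shifted by at most `Δ - 1`.
-/

namespace HilbertWeight

open Finset Topology

section Multichoose

theorem succ_mul_multichoose_succ (s d : ℕ) :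
    (d + 1) * Nat.multichoose s (d + 1) = s * Nat.multichoose (s + 1) d := by
  cases s with
  | zero => simp
  | succ s =>
    rw [Nat.multichoose_eq, Nat.multichoose_eq, show s + 1 + (d + 1) - 1 = s + d + 1 by omega,
      show s + 1 + 1 + d - 1 = s + d + 1 by omega, mul_comm, Nat.choose_succ_right_eq, mul_comm,
      show s + d + 1 - d = s + 1 by omega]

theorem multichoose_succ_right_mono (s : ℕ) : Monotone (Nat.multichoose (s + 1)) :=
  monotone_nat_of_le_succ fun d => by rw [Nat.multichoose_succ_succ]; omega

theorem multichoose_le_of_le (s : ℕ) {d d' : ℕ} (hd : 0 < d) (h : d ≤ d') :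
    Nat.multichoose s d ≤ Nat.multichoose s d' := by
  cases s with
  | zero => obtain ⟨d, rfl⟩ := Nat.exists_eq_add_of_le' hd; simp
  | succ s => exact multichoose_succ_right_mono s h

theorem mul_multichoose_le (s d : ℕ) :
    d * Nat.multichoose s d ≤ s * Nat.multichoose (s + 1) d := by
  cases d with
  | zero => simp
  | succ d =>
    rw [succ_mul_multichoose_succ]
    exact Nat.mul_le_mul_left _ (multichoose_succ_right_mono s d.le_succ)

theorem multichoose_succ_le_sub_add (s : ℕ) {d β : ℕ} (h : β ≤ d) :
    Nat.multichoose (s + 1) d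
      ≤ Nat.multichoose (s + 1) (d - β) + β * Nat.multichoose s d := by
  induction β with
  | zero => simp
  | succ β ih =>
    have pascal : Nat.multichoose (s + 1) (d - β)
        = Nat.multichoose s (d - β) + Nat.multichoose (s + 1) (d - (β + 1)) := by
      rw [show d - β = d - (β + 1) + 1 by omega, Nat.multichoose_succ_succ]
    have := multichoose_le_of_le s (show 0 < d - β by omega) (Nat.sub_le d β)
    have := ih (by omega)
    rw [add_mul]
    omega

theorem mul_multichoose_succ_le_shift (s : ℕ) {d β : ℕ} (h : β ≤ d) :
    d * Nat.multichoose (s + 1) d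
      ≤ d * Nat.multichoose (s + 1) (d - β) + β * s * Nat.multichoose (s + 1) d :=
  calc d * Nat.multichoose (s + 1) d
      ≤ d * (Nat.multichoose (s + 1) (d - β) + β * Nat.multichoose s d) :=
        Nat.mul_le_mul_left d (multichoose_succ_le_sub_add s h)
    _ = d * Nat.multichoose (s + 1) (d - β) + β * (d * Nat.multichoose s d) := by ring
    _ ≤ d * Nat.multichoose (s + 1) (d - β) + β * (s * Nat.multichoose (s + 1) d) :=
      Nat.add_le_add_left (Nat.mul_le_mul_left β (mul_multichoose_le s d)) _
    _ = _ := by ring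

end Multichoose

/-- `f l ~ a · l ^ d / d!`, with `a = 0` allowed: the asymptotic form in which the dimension, the
degree and the Chow weight of a variety are read off its Hilbert function and its Hilbert
weights. -/
def HasGrowth (f : ℕ → ℝ) (d : ℕ) (a : ℝ) : Prop :=
  Tendsto (fun l : ℕ => (d.factorial : ℝ) * f l / (l : ℝ) ^ d) atTop (𝓝 a)

namespace HasGrowth

variable {f g : ℕ → ℝ} {d e : ℕ} {a b : ℝ}

theorem add (hf : HasGrowth f d a) (hg : HasGrowth g d b) :
    HasGrowth (fun l => f l + g l) d (a + b) :=
  (Tendsto.add hf hg).congr fun l => by ring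

theorem const_mul (r : ℝ) (hf : HasGrowth f d a) : HasGrowth (fun l => r * f l) d (r * a) :=
  (Tendsto.const_mul r hf).congr fun l => by ring

theorem sum {ι : Type*} {s : Finset ι} {f : ι → ℕ → ℝ} {a : ι → ℝ}
    (h : ∀ i ∈ s, HasGrowth (f i) d (a i)) :
    HasGrowth (fun l => ∑ i ∈ s, f i l) d (∑ i ∈ s, a i) :=
  (tendsto_finsetSum s h).congr fun l => by rw [mul_sum, sum_div]

theorem congr' (h : f =ᶠ[atTop] g) (hf : HasGrowth f d a) : HasGrowth g d a :=
  Tendsto.congr' (h.mono fun l hl => by simp only [hl]) hf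

theorem le_of_eventually_le (hf : HasGrowth f d a) (hg : HasGrowth g d b)
    (h : ∀ᶠ l in atTop, f l ≤ g l) : a ≤ b :=
  le_of_tendsto_of_tendsto hf hg (h.mono fun l hl => by simp only; gcongr)

theorem of_le_of_le {h : ℕ → ℝ} (hf : HasGrowth f d a) (hh : HasGrowth h d a)
    (hfg : ∀ᶠ l in atTop, f l ≤ g l) (hgh : ∀ᶠ l in atTop, g l ≤ h l) : HasGrowth g d a :=
  tendsto_of_tendsto_of_tendsto_of_le_of_le' hf hh
    (hfg.mono fun l hl => by gcongr) (hgh.mono fun l hl => by gcongr)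

theorem zero_of_lt (hf : HasGrowth f d a) (h : d < e) : HasGrowth f e 0 := by
  have inv_pow : Tendsto (fun l : ℕ => (e.factorial / d.factorial : ℝ) * ((l : ℝ) ^ (e - d))⁻¹)
      atTop (𝓝 0) := by
    simpa using (((tendsto_pow_atTop (α := ℝ) (Nat.sub_ne_zero_of_lt h)).comp
      tendsto_natCast_atTop_atTop).inv_tendsto_atTop).const_mul (e.factorial / d.factorial : ℝ)
  have := Tendsto.mul hf inv_pow
  rw [mul_zero] at this
  refine this.congr fun l => ?_
  rw [← Nat.add_sub_cancel' h.le, pow_add, Nat.add_sub_cancel_left]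
  field_simp

theorem eq_of_ne_zero (hf : HasGrowth f d a) (hf' : HasGrowth f e b) (ha : a ≠ 0) (hb : b ≠ 0) :
    d = e ∧ a = b := by
  rcases lt_trichotomy d e with h | rfl | h
  · exact absurd (tendsto_nhds_unique hf' (hf.zero_of_lt h)) hb
  · exact ⟨rfl, tendsto_nhds_unique hf hf'⟩
  · exact absurd (tendsto_nhds_unique hf (hf'.zero_of_lt h)) ha

theorem comp (hf : HasGrowth f d a) {φ : ℕ → ℕ} (hφ : Tendsto φ atTop atTop)
    (ratio : Tendsto (fun l : ℕ => (φ l : ℝ) / l) atTop (𝓝 1)) :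
    HasGrowth (fun l => f (φ l)) d a := by
  have := (Tendsto.comp hf hφ).mul (ratio.pow d)
  rw [one_pow, mul_one] at this
  refine this.congr' ?_
  filter_upwards [hφ.eventually_gt_atTop 0] with l hl
  rw [Function.comp_apply, div_pow]
  field_simp

theorem comp_add (hf : HasGrowth f d a) (β : ℕ) : HasGrowth (fun l => f (l + β)) d a := by
  refine hf.comp (tendsto_add_atTop_nat β) ?_
  have : Tendsto (fun l : ℕ => 1 + (β : ℝ) / l) atTop (𝓝 (1 + 0)) :=
    (tendsto_const_div_atTop_nhds_zero_nat _).const_add _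
  rw [add_zero] at this
  refine this.congr' ?_
  filter_upwards [eventually_gt_atTop 0] with l hl
  push_cast
  field_simp

theorem comp_sub (hf : HasGrowth f d a) (β : ℕ) : HasGrowth (fun l => f (l - β)) d a := by
  refine hf.comp (tendsto_sub_atTop_nat β) ?_
  have : Tendsto (fun l : ℕ => 1 - (β : ℝ) / l) atTop (𝓝 (1 - 0)) :=
    (tendsto_const_div_atTop_nhds_zero_nat _).const_sub _
  rw [sub_zero] at this
  refine this.congr' ?_
  filter_upwards [eventually_gt_atTop 0, eventually_ge_atTop β] with l hl hβ
  push_cast [hβ]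
  field_simp

end HasGrowth

theorem hasGrowth_multichoose_succ (s : ℕ) :
    HasGrowth (fun l => (Nat.multichoose (s + 1) l : ℝ)) s 1 := by
  have choose_growth : HasGrowth (fun l => (l.choose s : ℝ)) s 1 := by
    have ne_zero : ∀ᶠ l : ℕ in atTop, ((l : ℝ) ^ s / s.factorial) ≠ 0 := by
      filter_upwards [eventually_gt_atTop 0] with l hl
      positivity
    refine ((Asymptotics.isEquivalent_iff_tendsto_one ne_zero).1 (isEquivalent_choose s)).congr
      fun l => ?_
    simp only [Pi.div_apply]
    field_simp
  refine (choose_growth.comp_add s).congr' (Eventually.of_forall fun l => ?_)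
  simp only [Nat.multichoose_eq, show s + 1 + l - 1 = l + s by omega, Nat.choose_symm_add]

theorem hasGrowth_multichoose_sub_zero {s d : ℕ} (h : s ≤ d) (β : ℕ) :
    HasGrowth (fun l => (Nat.multichoose s (l - β) : ℝ)) d 0 := by
  cases s with
  | zero =>
    refine tendsto_const_nhds.congr' ?_
    filter_upwards [eventually_gt_atTop β] with l hl
    rw [show l - β = l - β - 1 + 1 by omega, Nat.multichoose_zero_succ]
    simp
  | succ s => exact ((hasGrowth_multichoose_succ s).comp_sub β).zero_of_lt h

section Exponents

variable {ι : Type*}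

theorem weight_nonneg {c : ι → ℝ} (hc : ∀ i, 0 ≤ c i) (a : ι →₀ ℕ) : 0 ≤ Finsupp.weight c a := by
  rw [Finsupp.weight_apply]
  exact sum_nonneg fun i _ => nsmul_nonneg (hc i) _

theorem weight_le_degree_mul {c : ι → ℝ} {C : ℝ} (hC : ∀ i, c i ≤ C) (a : ι →₀ ℕ) :
    Finsupp.weight c a ≤ a.degree * C := by
  rw [Finsupp.weight_apply, Finsupp.degree_apply, Nat.cast_sum, sum_mul]
  refine sum_le_sum fun i _ => ?_
  simp only [nsmul_eq_mul]
  gcongr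
  exact hC i

variable [DecidableEq ι]

theorem sum_apply_finsuppAntidiag_eq {σ : Finset ι} {i j : ι} (hi : i ∈ σ) (hj : j ∈ σ) (d : ℕ) :
    ∑ a ∈ finsuppAntidiag σ d, a i = ∑ a ∈ finsuppAntidiag σ d, a j := by
  set e := Equiv.swap i j
  have swap_mem : ∀ l, e l ∈ σ ↔ l ∈ σ := fun l => by
    simp only [e, Equiv.swap_apply_def]
    split_ifs with h h' <;> simp [*]
  have maps : ∀ a ∈ finsuppAntidiag σ d, a.equivMapDomain e ∈ finsuppAntidiag σ d := by
    intro a ha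
    rw [mem_finsuppAntidiag] at ha ⊢
    refine ⟨ha.1 ▸ sum_equiv e (fun l => (swap_mem l).symm) fun l _ => ?_, fun l hl => ?_⟩
    · simp [e]
    · rw [← swap_mem]
      exact ha.2 (by simpa [e] using hl)
  have invol : ∀ a : ι →₀ ℕ, (a.equivMapDomain e).equivMapDomain e = a := fun a => by
    ext l; simp [e]
  exact sum_nbij' (·.equivMapDomain e) (·.equivMapDomain e) maps maps (fun a _ => invol a)
    (fun a _ => invol a) fun a _ => by simp [e]

theorem sum_apply_finsuppAntidiag {σ : Finset ι} {i : ι} (hi : i ∈ σ) (d : ℕ) :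
    ∑ a ∈ finsuppAntidiag σ (d + 1), a i = Nat.multichoose (#σ + 1) d := by
  refine Nat.eq_of_mul_eq_mul_left (card_pos.2 ⟨i, hi⟩) ?_
  calc #σ * ∑ a ∈ finsuppAntidiag σ (d + 1), a i
      = ∑ j ∈ σ, ∑ a ∈ finsuppAntidiag σ (d + 1), a j := by
        rw [sum_congr rfl fun j hj => sum_apply_finsuppAntidiag_eq hj hi (d + 1), sum_const,
          smul_eq_mul]
    _ = ∑ a ∈ finsuppAntidiag σ (d + 1), (d + 1) := by
        rw [sum_comm]
        exact sum_congr rfl fun a ha => (mem_finsuppAntidiag.1 ha).1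
    _ = #σ * Nat.multichoose (#σ + 1) d := by
        rw [sum_const, card_finsuppAntidiag_nat_eq_multichoose, smul_eq_mul, mul_comm,
          succ_mul_multichoose_succ]

theorem sum_weight_finsuppAntidiag (σ : Finset ι) (d : ℕ) (c : ι → ℝ) :
    ∑ a ∈ finsuppAntidiag σ (d + 1), Finsupp.weight c a
      = Nat.multichoose (#σ + 1) d * ∑ i ∈ σ, c i := by
  have weight_eq : ∀ a ∈ finsuppAntidiag σ (d + 1),
      Finsupp.weight c a = ∑ i ∈ σ, (a i : ℝ) * c i := by
    intro a ha
    rw [Finsupp.weight_apply]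
    simp only [nsmul_eq_mul]
    exact Finsupp.sum_of_support_subset a (mem_finsuppAntidiag.1 ha).2 _ (by simp)
  rw [sum_congr rfl weight_eq, sum_comm, mul_sum]
  refine sum_congr rfl fun i hi => ?_
  rw [← sum_mul, ← sum_apply_finsuppAntidiag hi, Nat.cast_sum]

variable [Fintype ι]

open Classical in
/-- The exponent vectors of degree `m` in `D`. -/
noncomputable def degreeSlice (D : Set (ι →₀ ℕ)) (m : ℕ) : Finset (ι →₀ ℕ) :=
  {a ∈ finsuppAntidiag univ m | a ∈ D}

theorem mem_degreeSlice {D : Set (ι →₀ ℕ)} {m : ℕ} {a : ι →₀ ℕ} :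
    a ∈ degreeSlice D m ↔ a ∈ D ∧ a.degree = m := by
  simp [degreeSlice, Finsupp.degree_eq_sum, and_comm]

theorem degreeSlice_mono {D D' : Set (ι →₀ ℕ)} (h : D ⊆ D') (m : ℕ) :
    degreeSlice D m ⊆ degreeSlice D' m :=
  fun _ ha => mem_degreeSlice.2 ((mem_degreeSlice.1 ha).imp_left fun h' => h h')

theorem degreeSlice_inter (D D' : Set (ι →₀ ℕ)) (m : ℕ) :
    degreeSlice D m ∩ degreeSlice D' m = degreeSlice (D ∩ D') m := by
  ext a
  simp only [mem_inter, mem_degreeSlice, Set.mem_inter_iff]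
  tauto

theorem sum_weight_degreeSlice_le {c : ι → ℝ} {C : ℝ} (hC : ∀ i, c i ≤ C) (D : Set (ι →₀ ℕ))
    (m : ℕ) : ∑ a ∈ degreeSlice D m, Finsupp.weight c a ≤ #(degreeSlice D m) * (m * C) := by
  rw [← nsmul_eq_mul]
  refine sum_le_card_nsmul _ _ _ fun a ha => ?_
  exact (mem_degreeSlice.1 ha).2 ▸ weight_le_degree_mul hC a

end Exponents

/-- The coordinate cone `b + ℕ^σ` of exponent vectors, normalized so that its apex `b` vanishes on
its set `σ` of free directions. Its dimension is `#σ`. -/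
@[ext]
structure CoordCone (ι : Type*) where
  apex : ι →₀ ℕ
  dirs : Finset ι
  apex_eq_zero : ∀ i ∈ dirs, apex i = 0

namespace CoordCone

variable {ι : Type*} (K : CoordCone ι)

/-- The exponent vectors lying in a coordinate cone. -/
def carrier : Set (ι →₀ ℕ) := {a | ∀ i ∉ K.dirs, a i = K.apex i}

theorem apex_le {a : ι →₀ ℕ} (ha : a ∈ K.carrier) : K.apex ≤ a := fun i => by
  by_cases hi : i ∈ K.dirs
  · simp [K.apex_eq_zero i hi]
  · exact (ha i hi).ge

theorem disjoint_carrier {K K' : CoordCone ι} (hdirs : K.dirs = K'.dirs) (hne : K ≠ K') :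
    Disjoint K.carrier K'.carrier := by
  refine Set.disjoint_left.2 fun a ha ha' => hne (CoordCone.ext (Finsupp.ext fun i => ?_) hdirs)
  by_cases hi : i ∈ K.dirs
  · rw [K.apex_eq_zero i hi, K'.apex_eq_zero i (hdirs ▸ hi)]
  · rw [← ha i hi, ha' i (hdirs ▸ hi)]

variable [DecidableEq ι]

/-- The face of a coordinate cone on which the free coordinate `i` takes the value `t`. -/
noncomputable def face (i : ι) (t : ℕ) : CoordCone ι where
  apex := K.apex + Finsupp.single i t
  dirs := K.dirs.erase i
  apex_eq_zero j hj := by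
    simp [K.apex_eq_zero j (mem_of_mem_erase hj), (ne_of_mem_erase hj)]

theorem mem_carrier_face {i : ι} (hi : i ∈ K.dirs) {t : ℕ} {a : ι →₀ ℕ} :
    a ∈ (K.face i t).carrier ↔ a ∈ K.carrier ∧ a i = t := by
  have apex_i := K.apex_eq_zero i hi
  constructor
  · refine fun ha => ⟨fun j hj => ?_, by simpa [face, apex_i] using ha i (notMem_erase i _)⟩
    have hji : j ≠ i := fun h => hj (h ▸ hi)
    simpa [face, hji] using ha j (fun h => hj (mem_of_mem_erase h))
  · rintro ⟨ha, rfl⟩ j hj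
    by_cases hji : j = i
    · simp [face, hji, apex_i]
    · simpa [face, hji] using ha j fun h => hj (mem_erase.2 ⟨hji, h⟩)

theorem carrier_face_subset {i : ι} (hi : i ∈ K.dirs) (t : ℕ) :
    (K.face i t).carrier ⊆ K.carrier :=
  fun _ ha => ((K.mem_carrier_face hi).1 ha).1

theorem degree_apex_face (i : ι) (t : ℕ) : (K.face i t).apex.degree = K.apex.degree + t := by
  simp [face]

theorem face_injective {i : ι} : Function.Injective (K.face i) := fun t t' h => by
  simpa [face] using DFunLike.congr_fun (congrArg apex h) i

variable [Fintype ι] {m : ℕ}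

theorem degreeSlice_carrier (hm : K.apex.degree ≤ m) :
    degreeSlice K.carrier m
      = (finsuppAntidiag K.dirs (m - K.apex.degree)).map (addRightEmbedding K.apex) := by
  ext a
  simp only [mem_degreeSlice, Finset.mem_map, mem_finsuppAntidiag, addRightEmbedding_apply]
  constructor
  · rintro ⟨ha, rfl⟩
    have support_sub : (a - K.apex).support ⊆ K.dirs := fun i hi => by
      by_contra h
      simp [ha i h] at hi
    refine ⟨a - K.apex, ⟨?_, support_sub⟩, tsub_add_cancel_of_le (K.apex_le ha)⟩
    rw [← sum_subset support_sub fun i _ hi => Finsupp.notMem_support_iff.1 hi,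
      ← Finsupp.degree_apply, eq_tsub_iff_add_eq_of_le hm, ← map_add,
      tsub_add_cancel_of_le (K.apex_le ha)]
  · rintro ⟨x, ⟨hx, support_sub⟩, rfl⟩
    refine ⟨fun i hi => ?_, ?_⟩
    · simp [Finsupp.notMem_support_iff.1 fun h => hi (support_sub h)]
    · rw [map_add, Finsupp.degree_apply,
        sum_subset support_sub fun i _ hi => Finsupp.notMem_support_iff.1 hi, hx,
        tsub_add_cancel_of_le hm]

theorem card_degreeSlice_carrier (hm : K.apex.degree ≤ m) :
    #(degreeSlice K.carrier m) = Nat.multichoose #K.dirs (m - K.apex.degree) := by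
  rw [K.degreeSlice_carrier hm, card_map, card_finsuppAntidiag_nat_eq_multichoose]

theorem card_degreeSlice_carrier_le (m : ℕ) :
    #(degreeSlice K.carrier m) ≤ Nat.multichoose #K.dirs (m - K.apex.degree) := by
  rcases le_or_gt K.apex.degree m with hm | hm
  · exact (K.card_degreeSlice_carrier hm).le
  · rw [card_eq_zero.2 (eq_empty_iff_forall_notMem.2 fun a ha => ?_)]
    · exact Nat.zero_le _
    · obtain ⟨haK, rfl⟩ := mem_degreeSlice.1 ha
      exact hm.not_ge (Finsupp.degree_mono (K.apex_le haK))

theorem sum_weight_degreeSlice_carrier (hm : K.apex.degree < m) (c : ι → ℝ) :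
    ∑ a ∈ degreeSlice K.carrier m, Finsupp.weight c a
      = Nat.multichoose (#K.dirs + 1) (m - K.apex.degree - 1) * ∑ i ∈ K.dirs, c i
        + Nat.multichoose #K.dirs (m - K.apex.degree) * Finsupp.weight c K.apex := by
  rw [K.degreeSlice_carrier hm.le, sum_map]
  simp only [addRightEmbedding_apply, map_add, sum_add_distrib, sum_const, nsmul_eq_mul,
    card_finsuppAntidiag_nat_eq_multichoose]
  rw [← sum_weight_finsuppAntidiag, Nat.sub_add_cancel (by omega)]

theorem hasGrowth_card {n : ℕ} (hK : #K.dirs = n + 1) :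
    HasGrowth (fun l => (#(degreeSlice K.carrier l) : ℝ)) n 1 := by
  refine ((hasGrowth_multichoose_succ n).comp_sub K.apex.degree).congr' ?_
  filter_upwards [eventually_ge_atTop K.apex.degree] with l hl
  rw [K.card_degreeSlice_carrier hl, hK]

theorem hasGrowth_sum_weight {n : ℕ} (hK : #K.dirs ≤ n + 1) (c : ι → ℝ) :
    HasGrowth (fun l => ∑ a ∈ degreeSlice K.carrier l, Finsupp.weight c a) (n + 1)
      (if #K.dirs = n + 1 then ∑ i ∈ K.dirs, c i else 0) := by
  have leading : HasGrowth
      (fun l => (Nat.multichoose (#K.dirs + 1) (l - (K.apex.degree + 1)) : ℝ)) (n + 1)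
      (if #K.dirs = n + 1 then 1 else 0) := by
    split_ifs with h
    · rw [h]
      exact (hasGrowth_multichoose_succ (n + 1)).comp_sub _
    · exact hasGrowth_multichoose_sub_zero (by omega) _
  have lower := hasGrowth_multichoose_sub_zero hK K.apex.degree
  have := (leading.const_mul (∑ i ∈ K.dirs, c i)).add (lower.const_mul (Finsupp.weight c K.apex))
  rw [mul_zero, add_zero, mul_ite, mul_one, mul_zero] at this
  refine this.congr' ?_
  filter_upwards [eventually_gt_atTop K.apex.degree] with l hl
  rw [K.sum_weight_degreeSlice_carrier hl, Nat.sub_sub]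
  ring

theorem exists_card_inter_le {K K' : CoordCone ι} {n : ℕ} (hK : #K.dirs = n + 1)
    (hK' : #K'.dirs = n + 1) (hne : K ≠ K') :
    ∃ x, (K.dirs = K'.dirs → x = 0) ∧ x ≤ K.apex.degree + K'.apex.degree ∧
      ∀ m, #(degreeSlice K.carrier m ∩ degreeSlice K'.carrier m) ≤ Nat.multichoose n (m - x) := by
  simp only [degreeSlice_inter]
  by_cases hdirs : K.dirs = K'.dirs
  · refine ⟨0, fun _ => rfl, Nat.zero_le _, fun m => ?_⟩
    rw [(disjoint_carrier hdirs hne).inter_eq]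
    simp [degreeSlice]
  · obtain ⟨i, hi, hi'⟩ : ∃ i ∈ K.dirs, i ∉ K'.dirs :=
      not_subset.1 fun h => hdirs (eq_of_subset_of_card_le h (hK'.trans hK.symm).le)
    have inter_sub : K.carrier ∩ K'.carrier ⊆ (K.face i (K'.apex i)).carrier := fun a ha =>
      (K.mem_carrier_face hi).2 ⟨ha.1, ha.2 i hi'⟩
    refine ⟨K.apex.degree + K'.apex i, fun h => absurd h hdirs,
      Nat.add_le_add_left (Finsupp.le_degree i _) _, fun m => ?_⟩
    refine (card_le_card (degreeSlice_mono inter_sub m)).trans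
      ((card_degreeSlice_carrier_le _ m).trans_eq ?_)
    rw [degree_apex_face, face, card_erase_of_mem hi, hK, Nat.add_sub_cancel]

end CoordCone

section DoubleCounting

variable {κ α : Type*}

theorem sum_biUnion_le_sum_sum {M : Type*} [AddCommMonoid M] [PartialOrder M]
    [IsOrderedAddMonoid M] [DecidableEq α] (F : Finset κ) (A : κ → Finset α) {w : α → M}
    (hw : ∀ a, 0 ≤ w a) : ∑ a ∈ F.biUnion A, w a ≤ ∑ p ∈ F, ∑ a ∈ A p, w a := by
  classical
  induction F using Finset.induction_on with
  | empty => simp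
  | insert p F hp ih =>
    rw [biUnion_insert, sum_insert hp]
    calc ∑ a ∈ A p ∪ F.biUnion A, w a
        ≤ ∑ a ∈ A p ∪ F.biUnion A, w a + ∑ a ∈ A p ∩ F.biUnion A, w a :=
          le_add_of_nonneg_right (sum_nonneg fun a _ => hw a)
      _ = ∑ a ∈ A p, w a + ∑ a ∈ F.biUnion A, w a := sum_union_inter
      _ ≤ ∑ a ∈ A p, w a + ∑ p ∈ F, ∑ a ∈ A p, w a := by gcongr

/- An element lying in `r` of the sets is counted `2 r` times on the left and `2 + r (r - 1)` times
on the right, and `(r - 1) (r - 2) ≥ 0`. -/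
theorem two_mul_sum_sum_le_add_sum_offDiag [DecidableEq α] {F : Finset κ} {A : κ → Finset α}
    {D : Finset α} (hA : ∀ p ∈ F, A p ⊆ D) {w : α → ℝ} (hw : ∀ a ∈ D, 0 ≤ w a) :
    2 * ∑ p ∈ F, ∑ a ∈ A p, w a
      ≤ 2 * ∑ a ∈ D, w a + ∑ pq ∈ F.offDiag, ∑ a ∈ A pq.1 ∩ A pq.2, w a := by
  have two_mul_le (r : ℕ) : 2 * r ≤ 2 + (r * r - r) := by
    rcases Nat.lt_or_ge r 2 with h | h
    · interval_cases r <;> norm_num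
    · obtain ⟨u, rfl⟩ := Nat.exists_eq_add_of_le h
      rw [← Nat.mul_sub_one, show 2 + u - 1 = 1 + u by omega]
      nlinarith
  have single_count : ∑ p ∈ F, ∑ a ∈ A p, w a = ∑ a ∈ D, (#{p ∈ F | a ∈ A p} : ℝ) * w a := by
    rw [sum_comm' (t' := D) (s' := fun a => {p ∈ F | a ∈ A p})]
    · simp only [sum_const, nsmul_eq_mul]
    · simp only [mem_filter]
      exact fun p a => ⟨fun h => ⟨h, hA p h.1 h.2⟩, fun h => h.1⟩
  have pair_count : ∑ pq ∈ F.offDiag, ∑ a ∈ A pq.1 ∩ A pq.2, w a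
      = ∑ a ∈ D, (#({p ∈ F | a ∈ A p}.offDiag) : ℝ) * w a := by
    rw [sum_comm' (t' := D) (s' := fun a => {p ∈ F | a ∈ A p}.offDiag)]
    · simp only [sum_const, nsmul_eq_mul]
    · simp only [mem_offDiag, mem_filter, mem_inter]
      exact fun pq a => ⟨fun h => ⟨by tauto, hA _ h.1.1 h.2.1⟩, by tauto⟩
  rw [single_count, pair_count, mul_sum, mul_sum, ← sum_add_distrib]
  refine sum_le_sum fun a ha => ?_
  rw [offDiag_card, ← mul_assoc, ← add_mul]
  exact mul_le_mul_of_nonneg_right (mod_cast two_mul_le _) (hw a ha)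

theorem two_mul_sum_card_filter_lt_le [LinearOrder α] (F : Finset κ) (f : κ → α) :
    2 * ∑ p ∈ F, #{q ∈ F | f q < f p} ≤ #F.offDiag := by
  classical
  have card_gt : ∑ p ∈ F, #{q ∈ F | f p < f q} = ∑ p ∈ F, #{q ∈ F | f q < f p} :=
    sum_card_bipartiteAbove_eq_sum_card_bipartiteBelow fun p q => f p < f q
  have card_lt_add_card_gt : ∀ p ∈ F, #{q ∈ F | f q < f p} + #{q ∈ F | f p < f q} ≤ #F - 1 := by
    intro p hp
    rw [← card_union_of_disjoint (disjoint_filter.2 fun q _ h => h.not_gt), ← card_erase_of_mem hp]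
    refine card_le_card fun q hq => ?_
    rw [mem_union, mem_filter, mem_filter] at hq
    rw [mem_erase]
    rcases hq with ⟨hqF, h⟩ | ⟨hqF, h⟩
    · exact ⟨fun e => h.ne (congrArg f e), hqF⟩
    · exact ⟨fun e => h.ne' (congrArg f e), hqF⟩
  calc 2 * ∑ p ∈ F, #{q ∈ F | f q < f p}
      = ∑ p ∈ F, (#{q ∈ F | f q < f p} + #{q ∈ F | f p < f q}) := by
        rw [sum_add_distrib, card_gt, two_mul]
    _ ≤ #F * (#F - 1) := by simpa using sum_le_card_nsmul _ _ _ card_lt_add_card_gt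
    _ = #F.offDiag := by rw [offDiag_card, Nat.mul_sub_one]

end DoubleCounting

section LowerSet

variable {ι : Type*} {D : Set (ι →₀ ℕ)} {n Δ : ℕ}

/-- The `(n + 1)`-dimensional coordinate cones contained in `D`. -/
def topCones (D : Set (ι →₀ ℕ)) (n : ℕ) : Set (CoordCone ι) :=
  {K | #K.dirs = n + 1 ∧ K.carrier ⊆ D}

theorem exists_mem_topCones_degree_apex_eq (hD : IsLowerSet D) {K : CoordCone ι}
    (hK : K ∈ topCones D n) {t : ℕ} (ht : t ≤ K.apex.degree) :
    ∃ K' ∈ topCones D n, K'.dirs = K.dirs ∧ K'.apex.degree = t := by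
  obtain ⟨b, hb, hbt⟩ := Finsupp.exists_le_degree_eq K.apex t ht
  have b_eq_zero : ∀ i ∈ K.dirs, b i = 0 := fun i hi =>
    Nat.le_zero.1 ((hb i).trans_eq (K.apex_eq_zero i hi))
  refine ⟨⟨b, K.dirs, b_eq_zero⟩, ⟨hK.1, fun a ha => ?_⟩, rfl, hbt⟩
  refine hD (le_add_of_nonneg_right zero_le : a ≤ a + (K.apex - b)) (hK.2 fun i hi => ?_)
  rw [Finsupp.add_apply, Finsupp.tsub_apply, show a i = b i from ha i hi,
    add_tsub_cancel_of_le (hb i)]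

/- Dickson's lemma: the complement of `D` has finitely many minimal elements; take `t` larger than
all their coordinates. -/
theorem exists_threshold_of_isLowerSet [Finite ι] (hD : IsLowerSet D) :
    ∃ t : ℕ, ∀ a ∈ D, ∀ a' : ι →₀ ℕ, (∀ i, a' i = a i ∨ t ≤ a i) → a' ∈ D := by
  have hfin : {u | Minimal (· ∉ D) u}.Finite :=
    WellQuasiOrderedLE.finite_of_isAntichain (setOfPred_minimal_antichain _)
  refine ⟨∑ u ∈ hfin.toFinset, u.degree, fun a ha a' h => ?_⟩
  by_contra ha'
  obtain ⟨u, hua', hu⟩ := exists_minimal_le_of_wellFoundedLT (· ∉ D) a' ha'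
  refine hu.1 (hD (fun i => ?_ : u ≤ a) ha)
  rcases h i with h | h
  · exact (hua' i).trans_eq h
  · calc u i ≤ u.degree := Finsupp.le_degree i u
      _ ≤ ∑ u ∈ hfin.toFinset, u.degree :=
        single_le_sum (fun _ _ => Nat.zero_le _) (hfin.mem_toFinset.2 hu)
      _ ≤ a i := h

theorem finite_setOf_apex_le [Finite ι] (b : ι →₀ ℕ) : {K : CoordCone ι | K.apex ≤ b}.Finite := by
  classical
  have := Fintype.ofFinite ι
  refine Set.Finite.of_injOn (f := fun K : CoordCone ι => (K.apex, K.dirs))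
    (t := ↑(Iic b ×ˢ (univ : Finset (Finset ι)))) (fun K hK => ?_) (fun K _ K' _ h => ?_)
    (finite_toSet _)
  · simpa using hK
  · exact CoordCone.ext (congrArg Prod.fst h) (congrArg Prod.snd h)

theorem exists_finset_coordCone_cover [Finite ι] (hD : IsLowerSet D) :
    ∃ G : Finset (CoordCone ι), (∀ K ∈ G, K.carrier ⊆ D) ∧ ∀ a ∈ D, ∃ K ∈ G, a ∈ K.carrier := by
  classical
  have := Fintype.ofFinite ι
  obtain ⟨t, ht⟩ := exists_threshold_of_isLowerSet hD
  have hfin : {K : CoordCone ι | K.apex ≤ Finsupp.equivFunOnFinite.symm (fun _ => t) ∧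
      K.carrier ⊆ D}.Finite := (finite_setOf_apex_le _).subset fun K hK => hK.1
  refine ⟨hfin.toFinset, fun K hK => (hfin.mem_toFinset.1 hK).2, fun a ha => ?_⟩
  let K : CoordCone ι :=
    ⟨a.filter fun i => a i < t, {i | t ≤ a i}, fun i hi => by simp_all⟩
  have apex_eq : ∀ i ∉ K.dirs, K.apex i = a i := fun i hi => by
    rw [mem_filter_univ, not_le] at hi
    exact Finsupp.filter_apply_pos _ _ hi
  refine ⟨K, hfin.mem_toFinset.2 ⟨fun i => ?_, fun a' ha' => ht a ha a' fun i => ?_⟩,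
    fun i hi => (apex_eq i hi).symm⟩
  · rw [Finsupp.filter_apply]
    split_ifs with h
    exacts [h.le, Nat.zero_le t]
  · by_cases hi : i ∈ K.dirs
    · exact Or.inr (by simpa [K] using hi)
    · exact Or.inl ((ha' i hi).trans (apex_eq i hi))

variable [Fintype ι] [DecidableEq ι]

theorem degreeSlice_nonempty (hD : IsLowerSet D) {a : ℝ} (ha : a ≠ 0)
    (hH : HasGrowth (fun l => (#(degreeSlice D l) : ℝ)) n a) (m : ℕ) :
    (degreeSlice D m).Nonempty := by
  obtain ⟨l, hml, b, hb⟩ : ∃ l ≥ m, (degreeSlice D l).Nonempty := by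
    by_contra! h
    refine ha (tendsto_nhds_unique hH (tendsto_const_nhds.congr' ?_))
    filter_upwards [eventually_ge_atTop m] with l hl
    simp [h l hl]
  obtain ⟨hbD, rfl⟩ := mem_degreeSlice.1 hb
  obtain ⟨b', hb', hm⟩ := Finsupp.exists_le_degree_eq b m hml
  exact ⟨b', mem_degreeSlice.2 ⟨hD hb' hbD, hm⟩⟩

theorem card_le_of_subset_topCones (hH : HasGrowth (fun l => (#(degreeSlice D l) : ℝ)) n Δ)
    {F : Finset (CoordCone ι)} (hF : ∀ K ∈ F, K ∈ topCones D n) : #F ≤ Δ := by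
  have inter_growth : ∀ p ∈ F.offDiag, HasGrowth
      (fun l => (#(degreeSlice p.1.carrier l ∩ degreeSlice p.2.carrier l) : ℝ)) n 0 := by
    intro p hp
    obtain ⟨hp1, hp2, hne⟩ := mem_offDiag.1 hp
    obtain ⟨x, -, -, hx⟩ := CoordCone.exists_card_inter_le (hF _ hp1).1 (hF _ hp2).1 hne
    refine HasGrowth.of_le_of_le (tendsto_const_nhds.congr fun l => by simp)
      (hasGrowth_multichoose_sub_zero le_rfl x) (f := fun _ => 0) ?_ ?_
    · exact Eventually.of_forall fun l => Nat.cast_nonneg _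
    · exact Eventually.of_forall fun l => Nat.cast_le.2 (hx l)
  have left_growth := (HasGrowth.sum fun K hK => CoordCone.hasGrowth_card K (hF K hK).1).const_mul 2
  have right_growth := (hH.const_mul 2).add (HasGrowth.sum inter_growth)
  have := left_growth.le_of_eventually_le right_growth <| Eventually.of_forall fun l => by
    simpa using two_mul_sum_sum_le_add_sum_offDiag (w := fun _ => 1)
      (fun K hK => degreeSlice_mono (hF K hK).2 l) fun _ _ => zero_le_one
  simp only [sum_const, nsmul_eq_mul, mul_one, mul_zero, add_zero] at this
  exact_mod_cast le_of_mul_le_mul_left this two_pos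

theorem finite_topCones (hH : HasGrowth (fun l => (#(degreeSlice D l) : ℝ)) n Δ) :
    (topCones D n).Finite := by
  by_contra h
  obtain ⟨F, hF, hcard⟩ := Set.Infinite.exists_subset_card_eq h (Δ + 1)
  have := card_le_of_subset_topCones hH fun K hK => hF hK
  omega

theorem card_dirs_le (hH : HasGrowth (fun l => (#(degreeSlice D l) : ℝ)) n Δ) {K : CoordCone ι}
    (hK : K.carrier ⊆ D) : #K.dirs ≤ n + 1 := by
  induction h : #K.dirs - (n + 1) generalizing K with
  | zero => omega
  | succ r ih =>
    obtain ⟨i, hi⟩ : K.dirs.Nonempty := card_pos.1 (by omega)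
    have face_sub : ∀ t, (K.face i t).carrier ⊆ D := fun t => (K.carrier_face_subset hi t).trans hK
    have card_face : ∀ t, #(K.face i t).dirs = #K.dirs - 1 := fun _ => card_erase_of_mem hi
    have card_eq : #K.dirs = n + 2 := by
      have := ih (face_sub 0) (by rw [card_face]; omega)
      rw [card_face] at this
      omega
    refine absurd (finite_topCones hH) (Set.infinite_of_injective_forall_mem
      (K.face_injective (i := i)) fun t => ⟨?_, face_sub t⟩)
    rw [card_face, card_eq]
    omega

end LowerSet

section WeightOfLowerSet

variable {ι : Type*} {D : Set (ι →₀ ℕ)} {n Δ m : ℕ} {F : Finset (CoordCone ι)}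

theorem degree_apex_le_card_filter [DecidableEq ι] (hD : IsLowerSet D)
    (hF : ∀ K, K ∈ F ↔ K ∈ topCones D n) {K : CoordCone ι} (hK : K ∈ F) :
    K.apex.degree ≤ #{K' ∈ F | K'.dirs = K.dirs ∧ K'.apex.degree < K.apex.degree} := by
  refine (card_range K.apex.degree).symm.trans_le
    (card_le_card_of_surjOn (fun K' => K'.apex.degree) fun t ht => ?_)
  rw [coe_range, Set.mem_Iio] at ht
  obtain ⟨K', hK', hdirs, rfl⟩ := exists_mem_topCones_degree_apex_eq hD ((hF K).1 hK) ht.le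
  exact ⟨K', mem_coe.2 (mem_filter.2 ⟨(hF K').2 hK', hdirs, ht⟩), rfl⟩

theorem degree_apex_lt_card_filter [DecidableEq ι] (hD : IsLowerSet D)
    (hF : ∀ K, K ∈ F ↔ K ∈ topCones D n) {K : CoordCone ι} (hK : K ∈ F) :
    K.apex.degree < #{K' ∈ F | K'.dirs = K.dirs} := by
  refine (degree_apex_le_card_filter hD hF hK).trans_lt (card_lt_card ?_)
  refine (ssubset_iff_of_subset fun K' => ?_).2 ⟨K, by simp [hK], by simp⟩
  simp only [mem_filter]
  exact fun h => ⟨h.1, h.2.1⟩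

theorem degree_apex_add_degree_apex_lt_card (hD : IsLowerSet D)
    (hF : ∀ K, K ∈ F ↔ K ∈ topCones D n) {K K' : CoordCone ι} (hK : K ∈ F) (hK' : K' ∈ F)
    (hdirs : K.dirs ≠ K'.dirs) : K.apex.degree + K'.apex.degree < #F := by
  classical
  have disj : Disjoint {L ∈ F | L.dirs = K.dirs} {L ∈ F | L.dirs = K'.dirs} :=
    disjoint_filter.2 fun L _ h h' => hdirs (h.symm.trans h')
  calc K.apex.degree + K'.apex.degree
      < #{L ∈ F | L.dirs = K.dirs} + #{L ∈ F | L.dirs = K'.dirs} :=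
        add_lt_add (degree_apex_lt_card_filter hD hF hK) (degree_apex_lt_card_filter hD hF hK')
    _ ≤ #F := by
        rw [← card_union_of_disjoint disj]
        exact card_le_card (union_subset (filter_subset _ _) (filter_subset _ _))

theorem two_mul_sum_degree_apex_le (hD : IsLowerSet D) (hF : ∀ K, K ∈ F ↔ K ∈ topCones D n) :
    2 * ∑ K ∈ F, K.apex.degree ≤ #F.offDiag := by
  classical
  refine le_trans (Nat.mul_le_mul_left 2 (sum_le_sum fun K hK => ?_))
    (two_mul_sum_card_filter_lt_le F fun K : CoordCone ι => K.apex.degree)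
  exact (degree_apex_le_card_filter hD hF hK).trans
    (card_le_card (monotone_filter_right F fun _ _ h => h.2))

variable {c : ι → ℝ} {C e : ℝ}

theorem sum_dirs_le_mul {K : CoordCone ι} (hK : #K.dirs = n + 1) (hC : ∀ i, c i ≤ C) :
    ∑ i ∈ K.dirs, c i ≤ (n + 1) * C := by
  simpa [hK] using sum_le_card_nsmul K.dirs c C fun i _ => hC i

variable [Fintype ι] [DecidableEq ι]

theorem CoordCone.multichoose_mul_sum_le (K : CoordCone ι) (hK : #K.dirs = n + 1)
    (hm : K.apex.degree < m) (hc : ∀ i, 0 ≤ c i) :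
    Nat.multichoose (n + 2) (m - 1) * ∑ i ∈ K.dirs, c i
      ≤ ∑ a ∈ degreeSlice K.carrier m, Finsupp.weight c a
        + K.apex.degree * (Nat.multichoose (n + 1) m * ∑ i ∈ K.dirs, c i) := by
  have shift : Nat.multichoose (n + 2) (m - 1) ≤ Nat.multichoose (n + 2) (m - K.apex.degree - 1)
      + K.apex.degree * Nat.multichoose (n + 1) m := by
    refine (multichoose_succ_le_sub_add (n + 1) (Nat.le_sub_one_of_lt hm)).trans ?_
    rw [Nat.sub_right_comm]
    gcongr
    exact multichoose_succ_right_mono n (Nat.sub_le m 1)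
  have shift_mul := mul_le_mul_of_nonneg_right (Nat.cast_le (α := ℝ).2 shift)
    (sum_nonneg fun i (_ : i ∈ K.dirs) => hc i)
  have apex_nonneg := mul_nonneg (Nat.cast_nonneg (Nat.multichoose (n + 1) (m - K.apex.degree)))
    (weight_nonneg hc K.apex)
  rw [K.sum_weight_degreeSlice_carrier hm, hK]
  push_cast at shift_mul
  linarith

theorem le_sum_of_hasGrowth_sum_weight (hD : IsLowerSet D)
    (hH : HasGrowth (fun l => (#(degreeSlice D l) : ℝ)) n Δ) (hc : ∀ i, 0 ≤ c i)
    (he : HasGrowth (fun l => ∑ a ∈ degreeSlice D l, Finsupp.weight c a) (n + 1) e)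
    (hF : ∀ K, K ∈ F ↔ K ∈ topCones D n) : e ≤ ∑ K ∈ F, ∑ i ∈ K.dirs, c i := by
  classical
  obtain ⟨G, hG, hcover⟩ := exists_finset_coordCone_cover hD
  have slice_sub : ∀ l, degreeSlice D l ⊆ G.biUnion fun K => degreeSlice K.carrier l := by
    intro l a ha
    obtain ⟨haD, hal⟩ := mem_degreeSlice.1 ha
    obtain ⟨K, hK, haK⟩ := hcover a haD
    exact mem_biUnion.2 ⟨K, hK, mem_degreeSlice.2 ⟨haK, hal⟩⟩
  have cover_growth := HasGrowth.sum fun K (hK : K ∈ G) =>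
    K.hasGrowth_sum_weight (card_dirs_le hH (hG K hK)) c
  calc e ≤ ∑ K ∈ G, if #K.dirs = n + 1 then ∑ i ∈ K.dirs, c i else 0 :=
        he.le_of_eventually_le cover_growth <| Eventually.of_forall fun l =>
          (sum_le_sum_of_subset_of_nonneg (slice_sub l) fun a _ _ => weight_nonneg hc a).trans
            (sum_biUnion_le_sum_sum G _ (weight_nonneg hc))
    _ = ∑ K ∈ G with #K.dirs = n + 1, ∑ i ∈ K.dirs, c i := (sum_filter _ _).symm
    _ ≤ ∑ K ∈ F, ∑ i ∈ K.dirs, c i := by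
        refine sum_le_sum_of_subset_of_nonneg (fun K hK => ?_) fun K _ _ =>
          sum_nonneg fun i _ => hc i
        rw [mem_filter] at hK
        exact (hF K).2 ⟨hK.2, hG K hK.1⟩

theorem sum_weight_inter_le (hD : IsLowerSet D) (hF : ∀ K, K ∈ F ↔ K ∈ topCones D n)
    (hC : ∀ i, c i ≤ C) (hC0 : 0 ≤ C) (hm : #F ≤ m) {K K' : CoordCone ι} (hK : K ∈ F)
    (hK' : K' ∈ F) (hne : K ≠ K') :
    ∑ a ∈ degreeSlice K.carrier m ∩ degreeSlice K'.carrier m, Finsupp.weight c a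
      ≤ n * (Nat.multichoose (n + 1) m * C) := by
  obtain ⟨x, x_eq_zero, x_le, hx⟩ :=
    CoordCone.exists_card_inter_le ((hF K).1 hK).1 ((hF K').1 hK').1 hne
  have card_pos : 0 < #F := card_pos.2 ⟨K, hK⟩
  have x_lt : x < m := by
    by_cases hdirs : K.dirs = K'.dirs
    · rw [x_eq_zero hdirs]; omega
    · have := degree_apex_add_degree_apex_lt_card hD hF hK hK' hdirs
      omega
  have card_mul_le : #(degreeSlice K.carrier m ∩ degreeSlice K'.carrier m) * m
      ≤ n * Nat.multichoose (n + 1) m := by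
    calc #(degreeSlice K.carrier m ∩ degreeSlice K'.carrier m) * m
        ≤ Nat.multichoose n m * m := by
          gcongr
          exact (hx m).trans (multichoose_le_of_le n (by omega) (Nat.sub_le m x))
      _ ≤ n * Nat.multichoose (n + 1) m := by
          rw [mul_comm]
          exact mul_multichoose_le n m
  calc ∑ a ∈ degreeSlice K.carrier m ∩ degreeSlice K'.carrier m, Finsupp.weight c a
      ≤ #(degreeSlice K.carrier m ∩ degreeSlice K'.carrier m) * (m * C) := by
        rw [degreeSlice_inter]
        exact sum_weight_degreeSlice_le hC _ m
    _ = (#(degreeSlice K.carrier m ∩ degreeSlice K'.carrier m) * m : ℕ) * C := by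
        push_cast; ring
    _ ≤ (n * Nat.multichoose (n + 1) m : ℕ) * C := by gcongr
    _ = n * (Nat.multichoose (n + 1) m * C) := by push_cast; ring

theorem le_mul_of_hasGrowth_sum_weight (hD : IsLowerSet D)
    (hH : HasGrowth (fun l => (#(degreeSlice D l) : ℝ)) n Δ) (hc : ∀ i, 0 ≤ c i)
    (hC : ∀ i, c i ≤ C) (hC0 : 0 ≤ C)
    (he : HasGrowth (fun l => ∑ a ∈ degreeSlice D l, Finsupp.weight c a) (n + 1) e) :
    e ≤ Δ * ((n + 1) * C) := by
  have hF : ∀ K, K ∈ (finite_topCones hH).toFinset ↔ K ∈ topCones D n := fun K => by simp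
  have hcard := card_le_of_subset_topCones hH fun K => (hF K).1
  calc e ≤ ∑ K ∈ (finite_topCones hH).toFinset, ∑ i ∈ K.dirs, c i :=
        le_sum_of_hasGrowth_sum_weight hD hH hc he hF
    _ ≤ #(finite_topCones hH).toFinset * ((n + 1) * C) := by
        rw [← nsmul_eq_mul]
        exact sum_le_card_nsmul _ _ _ fun K hK => sum_dirs_le_mul ((hF K).1 hK).1 hC
    _ ≤ Δ * ((n + 1) * C) := by gcongr

theorem two_mul_sum_sum_weight_le (hD : IsLowerSet D) (hF : ∀ K, K ∈ F ↔ K ∈ topCones D n)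
    (hc : ∀ i, 0 ≤ c i) (hC : ∀ i, c i ≤ C) (hC0 : 0 ≤ C) (hm : #F ≤ m) :
    2 * ∑ K ∈ F, ∑ a ∈ degreeSlice K.carrier m, Finsupp.weight c a
      ≤ 2 * ∑ a ∈ degreeSlice D m, Finsupp.weight c a
        + #F.offDiag * (n * (Nat.multichoose (n + 1) m * C)) := by
  refine (two_mul_sum_sum_le_add_sum_offDiag
    (fun K hK => degreeSlice_mono ((hF K).1 hK).2 m) fun a _ => weight_nonneg hc a).trans ?_
  gcongr
  rw [← nsmul_eq_mul]
  refine sum_le_card_nsmul _ _ _ fun p hp => ?_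
  obtain ⟨hp₁, hp₂, hne⟩ := mem_offDiag.1 hp
  exact sum_weight_inter_le hD hF hC hC0 hm hp₁ hp₂ hne

theorem two_mul_sum_multichoose_mul_sum_le (hD : IsLowerSet D)
    (hF : ∀ K, K ∈ F ↔ K ∈ topCones D n) (hc : ∀ i, 0 ≤ c i) (hC : ∀ i, c i ≤ C) (hC0 : 0 ≤ C)
    (hm : #F ≤ m) :
    2 * ∑ K ∈ F, Nat.multichoose (n + 2) (m - 1) * ∑ i ∈ K.dirs, c i
      ≤ 2 * ∑ K ∈ F, ∑ a ∈ degreeSlice K.carrier m, Finsupp.weight c a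
        + #F.offDiag * ((n + 1) * (Nat.multichoose (n + 1) m * C)) := by
  have cone_le : ∀ K ∈ F, Nat.multichoose (n + 2) (m - 1) * ∑ i ∈ K.dirs, c i
      ≤ ∑ a ∈ degreeSlice K.carrier m, Finsupp.weight c a
        + K.apex.degree * ((n + 1) * (Nat.multichoose (n + 1) m * C)) := by
    intro K hK
    have apex_lt : K.apex.degree < m := (degree_apex_lt_card_filter hD hF hK).trans_le <|
      (card_le_card (filter_subset _ _)).trans hm
    refine (K.multichoose_mul_sum_le ((hF K).1 hK).1 apex_lt hc).trans ?_
    rw [mul_left_comm (n + 1 : ℝ)]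
    gcongr
    exact sum_dirs_le_mul ((hF K).1 hK).1 hC
  have degrees_le : 2 * ∑ K ∈ F, (K.apex.degree : ℝ) ≤ #F.offDiag :=
    mod_cast two_mul_sum_degree_apex_le hD hF
  calc 2 * ∑ K ∈ F, Nat.multichoose (n + 2) (m - 1) * ∑ i ∈ K.dirs, c i
      ≤ 2 * ∑ K ∈ F, (∑ a ∈ degreeSlice K.carrier m, Finsupp.weight c a
          + K.apex.degree * ((n + 1) * (Nat.multichoose (n + 1) m * C))) := by
        gcongr with K hK
        exact cone_le K hK
    _ = 2 * ∑ K ∈ F, ∑ a ∈ degreeSlice K.carrier m, Finsupp.weight c a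
          + (2 * ∑ K ∈ F, (K.apex.degree : ℝ)) *
            ((n + 1) * (Nat.multichoose (n + 1) m * C)) := by
        rw [sum_add_distrib, ← sum_mul]
        ring
    _ ≤ _ := by gcongr

theorem multichoose_mul_le_sum_weight (hD : IsLowerSet D)
    (hH : HasGrowth (fun l => (#(degreeSlice D l) : ℝ)) n Δ) (hc : ∀ i, 0 ≤ c i)
    (hC : ∀ i, c i ≤ C) (hC0 : 0 ≤ C)
    (he : HasGrowth (fun l => ∑ a ∈ degreeSlice D l, Finsupp.weight c a) (n + 1) e)
    (hm : Δ ≤ m) :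
    2 * (Nat.multichoose (n + 2) (m - 1) * e)
      ≤ 2 * ∑ a ∈ degreeSlice D m, Finsupp.weight c a
        + Δ ^ 2 * ((2 * n + 1) * (Nat.multichoose (n + 1) m * C)) := by
  set F := (finite_topCones hH).toFinset
  set PC := Nat.multichoose (n + 1) m * C
  have hF : ∀ K, K ∈ F ↔ K ∈ topCones D n := fun K => by simp [F]
  have hcard : #F ≤ Δ := card_le_of_subset_topCones hH fun K => (hF K).1
  have offDiag_le : (#F.offDiag : ℝ) ≤ Δ ^ 2 := by
    have : #F.offDiag ≤ Δ ^ 2 := by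
      rw [offDiag_card, sq]
      exact (Nat.sub_le _ _).trans (Nat.mul_le_mul hcard hcard)
    exact_mod_cast this
  have e_le := le_sum_of_hasGrowth_sum_weight hD hH hc he hF
  calc 2 * (Nat.multichoose (n + 2) (m - 1) * e)
      ≤ 2 * ∑ K ∈ F, Nat.multichoose (n + 2) (m - 1) * ∑ i ∈ K.dirs, c i := by
        rw [← mul_sum]
        gcongr
    _ ≤ 2 * ∑ K ∈ F, ∑ a ∈ degreeSlice K.carrier m, Finsupp.weight c a
          + #F.offDiag * ((n + 1) * PC) :=
        two_mul_sum_multichoose_mul_sum_le hD hF hc hC hC0 (hcard.trans hm)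
    _ ≤ 2 * ∑ a ∈ degreeSlice D m, Finsupp.weight c a + #F.offDiag * (n * PC)
          + #F.offDiag * ((n + 1) * PC) := by
        gcongr
        exact two_mul_sum_sum_weight_le hD hF hc hC hC0 (hcard.trans hm)
    _ = 2 * ∑ a ∈ degreeSlice D m, Finsupp.weight c a
          + #F.offDiag * ((2 * n + 1) * PC) := by ring
    _ ≤ 2 * ∑ a ∈ degreeSlice D m, Finsupp.weight c a + Δ ^ 2 * ((2 * n + 1) * PC) := by gcongr

end WeightOfLowerSet

section GreedyBasis

variable {𝕜 V α β : Type*} [Field 𝕜] [AddCommGroup V] [Module 𝕜 V] [LinearOrder β]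

variable (𝕜) in
open Classical in
/-- The basis of the span of the vectors `x a`, `a ∈ s`, chosen greedily in decreasing order of the
key `κ a`. -/
noncomputable def greedyBasis (κ : α → β) (x : α → V) (s : Finset α) : Finset α :=
  {a ∈ s | x a ∉ Submodule.span 𝕜 (x '' {b | b ∈ s ∧ κ a < κ b})}

variable {κ : α → β} {x : α → V} {s : Finset α}

theorem mem_greedyBasis {a : α} : a ∈ greedyBasis 𝕜 κ x s ↔
    a ∈ s ∧ x a ∉ Submodule.span 𝕜 (x '' {b | b ∈ s ∧ κ a < κ b}) := by
  simp [greedyBasis]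

theorem mem_span_greedyBasis {a : α} (ha : a ∈ s) :
    x a ∈ Submodule.span 𝕜 (x '' {b | b ∈ greedyBasis 𝕜 κ x s ∧ κ a ≤ κ b}) := by
  classical
  by_contra h
  obtain ⟨a, ha, hmax⟩ := exists_max_image
    {a ∈ s | x a ∉ Submodule.span 𝕜 (x '' {b | b ∈ greedyBasis 𝕜 κ x s ∧ κ a ≤ κ b})} κ
    ⟨a, mem_filter.2 ⟨ha, h⟩⟩
  obtain ⟨has, ha⟩ := mem_filter.1 ha
  have a_notMem : a ∉ greedyBasis 𝕜 κ x s := fun h =>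
    ha (Submodule.subset_span ⟨a, ⟨h, le_rfl⟩, rfl⟩)
  rw [mem_greedyBasis, not_and_not_right] at a_notMem
  refine ha (Submodule.span_le.2 ?_ (a_notMem has))
  rintro _ ⟨b, ⟨hbs, hab⟩, rfl⟩
  by_contra hb
  refine (hmax b (mem_filter.2 ⟨hbs, fun hb' => hb ?_⟩)).not_gt hab
  refine Submodule.span_mono (Set.image_mono ?_) hb'
  exact fun d hd => ⟨hd.1, hab.le.trans hd.2⟩

theorem linearIndepOn_greedyBasis (hκ : Function.Injective κ) :
    LinearIndepOn 𝕜 x (greedyBasis 𝕜 κ x s : Set α) := by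
  classical
  suffices ∀ t ⊆ greedyBasis 𝕜 κ x s, LinearIndepOn 𝕜 x (t : Set α) from this _ subset_rfl
  intro t
  induction t using Finset.induction_on_min_value κ with
  | empty => simp
  | insert a t hat hmin ih =>
    intro ht
    have htail := (subset_insert a t).trans ht
    rw [coe_insert]
    refine (ih htail).insert fun hspan =>
      (mem_greedyBasis.1 (ht (mem_insert_self a t))).2 (Submodule.span_mono ?_ hspan)
    refine Set.image_mono fun b hb => ⟨(mem_greedyBasis.1 (htail hb)).1, ?_⟩
    exact (hmin b hb).lt_of_ne fun h => hat (hκ h ▸ hb)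

theorem card_le_card_of_forall_mem_span {A B : Finset α} (hA : LinearIndepOn 𝕜 x (A : Set α))
    (h : ∀ a ∈ A, x a ∈ Submodule.span 𝕜 (x '' B)) : #A ≤ #B := by
  classical
  rw [← coe_image] at h
  calc #A = Module.finrank 𝕜 (Submodule.span 𝕜 (Set.range fun a : (A : Set α) => x a)) := by
        rw [finrank_span_eq_card hA]
        exact (Fintype.card_coe A).symm
    _ ≤ Module.finrank 𝕜 (Submodule.span 𝕜 (B.image x : Set V)) := by
        refine Submodule.finrank_mono (Submodule.span_le.2 ?_)
        rintro _ ⟨a, rfl⟩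
        exact h a a.2
    _ ≤ #B := (finrank_span_finset_le_card _).trans card_image_le

/- By Hall's marriage theorem, the independent set can be matched injectively into the greedy basis
with the key never decreasing. -/
theorem sum_le_sum_greedyBasis {A : Finset α} (hAs : A ⊆ s)
    (hA : LinearIndepOn 𝕜 x (A : Set α)) {w : α → ℝ} (hw : ∀ a, 0 ≤ w a)
    (hκw : ∀ a b, κ a ≤ κ b → w a ≤ w b) : ∑ a ∈ A, w a ≤ ∑ a ∈ greedyBasis 𝕜 κ x s, w a := by
  classical
  have hall : ∀ T : Finset A,
      #T ≤ #(T.biUnion fun a => {b ∈ greedyBasis 𝕜 κ x s | κ a ≤ κ b}) := by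
    intro T
    rw [← card_map (Function.Embedding.subtype _)]
    refine card_le_card_of_forall_mem_span (𝕜 := 𝕜) (x := x) (hA.mono ?_) fun a ha => ?_
    · exact fun a ha => by
        obtain ⟨a, -, rfl⟩ := Finset.mem_map.1 ha
        exact a.2
    · obtain ⟨a, haT, rfl⟩ := Finset.mem_map.1 ha
      refine Submodule.span_mono (Set.image_mono fun b hb => ?_)
        (mem_span_greedyBasis (κ := κ) (hAs a.2))
      exact mem_biUnion.2 ⟨a, haT, mem_filter.2 hb⟩
  obtain ⟨f, f_inj, hf⟩ := (all_card_le_biUnion_card_iff_exists_injective _).1 hall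
  calc ∑ a ∈ A, w a = ∑ a : A, w a := (sum_coe_sort A w).symm
    _ ≤ ∑ a : A, w (f a) := sum_le_sum fun a _ => hκw _ _ (mem_filter.1 (hf a)).2
    _ = ∑ b ∈ univ.image f, w b := (sum_image f_inj.injOn).symm
    _ ≤ ∑ b ∈ greedyBasis 𝕜 κ x s, w b := by
        refine sum_le_sum_of_subset_of_nonneg (image_subset_iff.2 fun a _ => ?_) fun b _ _ => hw b
        exact (mem_filter.1 (hf a)).1

end GreedyBasis

section StandardExponents

open MvPolynomial

section

variable {ι : Type*}

/-- The exponent vectors ordered by their weight, with ties broken lexicographically. -/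
noncomputable def weightLex (c : ι → ℝ) (a : ι →₀ ℕ) : ℝ ×ₗ Lex (ι →₀ ℕ) :=
  toLex (Finsupp.weight c a, toLex a)

theorem weightLex_injective (c : ι → ℝ) : Function.Injective (weightLex c) :=
  fun _ _ h => congrArg Prod.snd h

variable [LinearOrder ι]

theorem weight_le_of_weightLex_le {c : ι → ℝ} {a b : ι →₀ ℕ} (h : weightLex c a ≤ weightLex c b) :
    Finsupp.weight c a ≤ Finsupp.weight c b :=
  Prod.Lex.monotone_fst _ _ h

theorem weightLex_add_lt_add (c : ι → ℝ) {a b : ι →₀ ℕ} (h : weightLex c a < weightLex c b)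
    (d : ι →₀ ℕ) : weightLex c (a + d) < weightLex c (b + d) := by
  have weightLex_add : ∀ a, weightLex c (a + d) = weightLex c a + weightLex c d := fun a =>
    congrArg toLex (Prod.ext (map_add _ a d) rfl)
  rw [weightLex_add, weightLex_add]
  exact add_lt_add_left h _

end

variable {k : ℕ} {I : Ideal (MvPolynomial (Fin k) ℂ)} {c : Fin k → ℝ} {m : ℕ}

/-- The residue class of the monomial with exponent vector `a`. -/
noncomputable def monomialClass (I : Ideal (MvPolynomial (Fin k) ℂ)) (a : Fin k →₀ ℕ) :
    MvPolynomial (Fin k) ℂ ⧸ Submodule.restrictScalars ℂ I :=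
  (Submodule.restrictScalars ℂ I).mkQ (monomial a 1)

/-- The exponent vectors of the monomials that modulo `I` are not linear combinations of monomials
of the same degree which are larger with respect to `weightLex c`. -/
def standardExponents (I : Ideal (MvPolynomial (Fin k) ℂ)) (c : Fin k → ℝ) : Set (Fin k →₀ ℕ) :=
  {a | monomialClass I a ∉ Submodule.span ℂ
    (monomialClass I '' {b | b.degree = a.degree ∧ weightLex c a < weightLex c b})}

theorem isLowerSet_standardExponents : IsLowerSet (standardExponents I c) := by
  intro a b hba ha hb
  obtain ⟨d, rfl⟩ := exists_add_of_le hba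
  let mulMonomial := Submodule.mapQ (Submodule.restrictScalars ℂ I) (Submodule.restrictScalars ℂ I)
    (LinearMap.mulLeft ℂ (monomial d 1)) fun p hp => I.mul_mem_left _ hp
  have mulMonomial_class : ∀ a, mulMonomial (monomialClass I a) = monomialClass I (a + d) := by
    intro a
    change (Submodule.restrictScalars ℂ I).mkQ (monomial d 1 * monomial a 1) = _
    rw [monomial_mul, one_mul, add_comm, monomialClass]
  refine ha ?_
  rw [← mulMonomial_class]
  refine (Submodule.map_span_le _ _ _).2 ?_ (Submodule.mem_map_of_mem hb)
  rintro _ ⟨a, ⟨hdeg, hlt⟩, rfl⟩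
  rw [mulMonomial_class]
  exact Submodule.subset_span ⟨a + d, ⟨by simp [hdeg], weightLex_add_lt_add c hlt d⟩, rfl⟩

theorem degreeSlice_standardExponents : degreeSlice (standardExponents I c) m
    = greedyBasis ℂ (weightLex c) (monomialClass I) (degreeSlice Set.univ m) := by
  ext a
  simp only [mem_degreeSlice, mem_greedyBasis, standardExponents, Set.mem_ofPred_eq, Set.mem_univ,
    true_and]
  rw [and_comm, and_congr_right_iff]
  rintro rfl
  rfl

theorem gradedPiece_eq_span :
    gradedPiece I m = Submodule.span ℂ (monomialClass I '' {a | a.degree = m}) := by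
  have homogeneous_eq : homogeneousSubmodule (Fin k) ℂ m
      = Submodule.span ℂ ((fun a => monomial a 1) '' {a | a.degree = m}) := by
    rw [homogeneousSubmodule_eq_finsupp_supported, AddMonoidAlgebra.supported_eq_span_single]
    rfl
  rw [gradedPiece, homogeneous_eq, Submodule.map_span, Set.image_image]
  rfl

theorem isMonomialBasis_degreeSlice_standardExponents :
    IsMonomialBasis I m (degreeSlice (standardExponents I c) m) := by
  refine ⟨fun a ha => ?_, ?_, ?_⟩
  · rw [← Finsupp.degree_eq_sum, (mem_degreeSlice.1 ha).2]
  · rw [degreeSlice_standardExponents]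
    exact linearIndepOn_greedyBasis (weightLex_injective c)
  · rw [gradedPiece_eq_span]
    refine le_antisymm (Submodule.span_mono (Set.image_mono fun a ha => (mem_degreeSlice.1 ha).2))
      (Submodule.span_le.2 ?_)
    rintro _ ⟨a, ha, rfl⟩
    rw [degreeSlice_standardExponents]
    exact Submodule.span_mono (Set.image_mono fun b hb => hb.1)
      (mem_span_greedyBasis (mem_degreeSlice.2 ⟨Set.mem_univ a, ha⟩))

theorem hilbertFn_eq_card (I : Ideal (MvPolynomial (Fin k) ℂ)) (c : Fin k → ℝ) (m : ℕ) :
    hilbertFn I m = #(degreeSlice (standardExponents I c) m) := by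
  obtain ⟨-, indep, span_eq⟩ := isMonomialBasis_degreeSlice_standardExponents (I := I) (c := c)
    (m := m)
  rw [hilbertFn, ← span_eq, Set.image_eq_range, finrank_span_eq_card indep]
  exact Fintype.card_coe _

theorem hilbertWeight_eq_sum_weight (hc : ∀ i, 0 ≤ c i) :
    hilbertWeight I m c = ∑ a ∈ degreeSlice (standardExponents I c) m, Finsupp.weight c a := by
  have weight_eq : ∀ a : Fin k →₀ ℕ, ∑ i, (a i : ℝ) * c i = Finsupp.weight c a := fun a => by
    rw [Finsupp.weight_apply, Finsupp.sum_fintype a _ fun i => zero_smul ℕ (c i)]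
    simp only [nsmul_eq_mul]
  simp only [hilbertWeight, weight_eq]
  refine IsGreatest.csSup_eq ⟨⟨_, isMonomialBasis_degreeSlice_standardExponents, rfl⟩, ?_⟩
  rintro _ ⟨A, ⟨hA, indep, -⟩, rfl⟩
  rw [degreeSlice_standardExponents]
  refine sum_le_sum_greedyBasis (𝕜 := ℂ) (x := monomialClass I)
    (fun a ha => mem_degreeSlice.2 ⟨Set.mem_univ a, ?_⟩) indep (weight_nonneg hc)
    fun a b => weight_le_of_weightLex_le
  rw [Finsupp.degree_eq_sum, hA a ha]

end StandardExponents

section Scaling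

open MvPolynomial

variable {𝕜 : Type*} [Field 𝕜]

section

variable {R : Type*} [CommRing R] [Algebra 𝕜 R] {σ : R ≃ₐ[𝕜] R}

/-- The part of degree `m` of an algebra `R` whose grading is given by the automorphism `σ` that
acts on it as multiplication by `2 ^ m`. -/
def degreePart (σ : R ≃ₐ[𝕜] R) (m : ℕ) : Submodule 𝕜 R :=
  Module.End.eigenspace σ.toLinearMap (2 ^ m)

theorem mem_degreePart {m : ℕ} {x : R} : x ∈ degreePart σ m ↔ σ x = (2 : 𝕜) ^ m • x :=
  Module.End.mem_eigenspace_iff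

theorem mem_degreePart_one {x : R} : x ∈ degreePart σ 1 ↔ σ x = (2 : 𝕜) • x := by
  rw [mem_degreePart, pow_one]

theorem mul_mem_degreePart {m l : ℕ} {x y : R} (hx : x ∈ degreePart σ m)
    (hy : y ∈ degreePart σ l) : x * y ∈ degreePart σ (m + l) := by
  rw [mem_degreePart] at *
  rw [map_mul, hx, hy, smul_mul_smul_comm, pow_add]

theorem pow_mem_degreePart {x : R} (hx : x ∈ degreePart σ 1) (m : ℕ) :
    x ^ m ∈ degreePart σ m := by
  rw [mem_degreePart_one] at hx
  rw [mem_degreePart, map_pow, hx, smul_pow]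

theorem iSupIndep_degreePart [CharZero 𝕜] : iSupIndep (degreePart σ) :=
  (Module.End.eigenspaces_iSupIndep _).comp fun m l h =>
    Nat.pow_right_injective le_rfl (by exact_mod_cast h)

variable {ι : Type*} {v : ι → R} (hv : ∀ i, v i ∈ degreePart σ 1)

include hv in
theorem aeval_mem_degreePart {d : ℕ} {p : MvPolynomial ι 𝕜} (hp : p.IsHomogeneous d) :
    aeval v p ∈ degreePart σ d := by
  rw [p.as_sum, map_sum]
  refine Submodule.sum_mem _ fun a ha => ?_
  rw [aeval_monomial, ← Algebra.smul_def, mem_degreePart, map_smul, Finsupp.prod, map_prod,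
    smul_comm]
  have degree_eq : a.degree = d := by
    rw [Finsupp.degree_eq_weight_one]
    exact hp (mem_support_iff.1 ha)
  have map_pow_eq : ∀ i, σ (v i ^ a i) = (2 : 𝕜) ^ a i • v i ^ a i := fun i =>
    mem_degreePart.1 (pow_mem_degreePart (hv i) _)
  rw [prod_congr rfl fun i _ => map_pow_eq i, prod_smul, prod_pow_eq_pow_sum,
    ← Finsupp.degree_apply, degree_eq]

variable [CharZero 𝕜]

include hv in
theorem aeval_homogeneousComponent_of_mem {d : ℕ} {p : MvPolynomial ι 𝕜}
    (hp : aeval v p ∈ degreePart σ d) : aeval v (homogeneousComponent d p) = aeval v p := by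
  let s := insert d (range (p.totalDegree + 1))
  have sum_eq : ∑ j ∈ s, aeval v (homogeneousComponent j p)
      = ∑ j ∈ s, if j = d then aeval v p else 0 := by
    rw [sum_ite_eq', if_pos (mem_insert_self _ _), ← map_sum]
    conv_rhs => rw [← sum_homogeneousComponent p]
    congr 1
    refine (sum_subset (subset_insert _ _) fun j _ hj => ?_).symm
    exact homogeneousComponent_eq_zero _ _ (by simpa using hj)
  have eq_ite := (iSupIndep_iff_finsetSum_eq_imp_eq _).1 (iSupIndep_degreePart (σ := σ)) s _ _
    (fun j _ => ⟨aeval_mem_degreePart hv (homogeneousComponent_isHomogeneous j p), ?_⟩) sum_eq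
    d (mem_insert_self _ _)
  · rwa [if_pos rfl] at eq_ite
  · split_ifs with hj
    · exact hj ▸ hp
    · exact zero_mem _

include hv in
theorem aeval_homogeneousComponent_eq_zero {p : MvPolynomial ι 𝕜} (hp : aeval v p = 0) (d : ℕ) :
    aeval v (homogeneousComponent d p) = 0 := by
  rw [aeval_homogeneousComponent_of_mem hv (hp ▸ zero_mem _), hp]

include hv in
theorem degreePart_eq_map (hsurj : Function.Surjective (aeval v : MvPolynomial ι 𝕜 → R)) (m : ℕ) :
    degreePart σ m = (homogeneousSubmodule ι 𝕜 m).map (aeval v).toLinearMap := by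
  refine le_antisymm (fun x hx => ?_) ?_
  · obtain ⟨p, rfl⟩ := hsurj x
    exact ⟨_, homogeneousComponent_isHomogeneous m p, aeval_homogeneousComponent_of_mem hv hx⟩
  · rintro _ ⟨p, hp, rfl⟩
    exact aeval_mem_degreePart hv hp

end

section

variable (ι : Type*) (d : ℕ)

instance finite_homogeneousSubmodule [Finite ι] : Module.Finite 𝕜 (homogeneousSubmodule ι 𝕜 d) :=
  Module.Finite.iff_fg.2 (homogeneousSubmodule_fg ι 𝕜 d)

theorem finrank_homogeneousSubmodule [Fintype ι] :
    Module.finrank 𝕜 (homogeneousSubmodule ι 𝕜 d) = Nat.multichoose (Fintype.card ι) d := by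
  classical
  let : Fintype {a : ι →₀ ℕ | a.degree = d} := Fintype.ofFinset (finsuppAntidiag univ d) fun a => by
    simp [Finsupp.degree_eq_sum]
  rw [homogeneousSubmodule_eq_finsupp_supported,
    (AddMonoidAlgebra.supportedEquivFinsupp _).finrank_eq, Module.finrank_finsupp_self,
    Fintype.card_ofFinset, card_finsuppAntidiag_nat_eq_multichoose, card_univ]

end

section

variable (𝕜) [CharZero 𝕜] (ι : Type*)

/-- The automorphism of the polynomial ring that doubles every variable. -/
noncomputable def scale : MvPolynomial ι 𝕜 ≃ₐ[𝕜] MvPolynomial ι 𝕜 :=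
  AlgEquiv.ofAlgHom (aeval fun i => (2 : 𝕜) • X i) (aeval fun i => (2⁻¹ : 𝕜) • X i)
    (by ext i : 1; simp) (by ext i : 1; simp)

variable {𝕜 ι}

theorem scale_X (i : ι) : scale 𝕜 ι (X i) = (2 : 𝕜) • X i := by
  simp [scale]

theorem degreePart_scale (m : ℕ) : degreePart (scale 𝕜 ι) m = homogeneousSubmodule ι 𝕜 m := by
  have hsurj : Function.Surjective (aeval X : MvPolynomial ι 𝕜 → MvPolynomial ι 𝕜) := fun p =>
    ⟨p, aeval_X_left_apply p⟩
  rw [degreePart_eq_map (fun i => mem_degreePart_one.2 (scale_X i)) hsurj, aeval_X_left]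
  exact Submodule.map_id _

theorem map_scale_eq {I : Ideal (MvPolynomial ι 𝕜)}
    (hI : ∀ p ∈ I, ∀ j : ℕ, homogeneousComponent j p ∈ I) :
    I.map (scale 𝕜 ι : MvPolynomial ι 𝕜 →+* MvPolynomial ι 𝕜) = I := by
  have scale_component : ∀ (p : MvPolynomial ι 𝕜) (j : ℕ),
      scale 𝕜 ι (homogeneousComponent j p) = (2 : 𝕜) ^ j • homogeneousComponent j p := fun p j =>
    mem_degreePart.1 (degreePart_scale (𝕜 := 𝕜) (ι := ι) j ▸ homogeneousComponent_isHomogeneous j p)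
  refine le_antisymm (Ideal.map_le_iff_le_comap.2 fun p hp => ?_) fun p hp => ?_
  · rw [Ideal.mem_comap, ← sum_homogeneousComponent p, map_sum]
    refine I.sum_mem fun j _ => ?_
    rw [RingHom.coe_coe, scale_component]
    exact Submodule.smul_of_tower_mem I _ (hI p hp j)
  · rw [← sum_homogeneousComponent p]
    refine Ideal.sum_mem _ fun j _ => ?_
    rw [← inv_smul_smul₀ (pow_ne_zero j (two_ne_zero' 𝕜)) (homogeneousComponent j p),
      ← scale_component]
    exact Submodule.smul_of_tower_mem _ _ (Ideal.mem_map_of_mem _ (hI p hp j))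

end

end Scaling

section Noether

open MvPolynomial

variable {ι C R : Type*} [CommRing C] [CommRing R] [Algebra C R]

theorem prod_pow_eq_prod_map_toMultiset {M : Type*} [CommMonoid M] (a : ι →₀ ℕ) (g : ι → M) :
    (a.prod fun i e => g i ^ e) = (a.toMultiset.map g).prod := by
  rw [Finsupp.toMultiset_map, Finsupp.prod_toMultiset,
    Finsupp.prod_mapDomain_index (by simp) (by simp [pow_add])]

theorem coeff_aeval_of_natDegree_le_one {g : ι → Polynomial C} (hg : ∀ i, (g i).natDegree ≤ 1)
    {d : ℕ} {p : MvPolynomial ι C} (hp : p.IsHomogeneous d) :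
    (aeval g p).coeff d = eval (fun i => (g i).coeff 1) p := by
  rw [p.as_sum, map_sum, map_sum, Polynomial.finsetSum_coeff]
  refine sum_congr rfl fun a ha => ?_
  have card_eq : (a.toMultiset.map g).card * 1 = d := by
    rw [mul_one, Multiset.card_map, Finsupp.card_toMultiset,
      hp.degree_eq_sum_deg_support ha]
    rfl
  rw [aeval_monomial, eval_monomial, Polynomial.algebraMap_eq, Polynomial.coeff_C_mul,
    prod_pow_eq_prod_map_toMultiset, prod_pow_eq_prod_map_toMultiset, ← card_eq,
    Polynomial.coeff_multiset_prod_of_natDegree_le _ _ (by simpa using fun i _ => hg i),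
    Multiset.map_map]
  rfl

theorem isIntegral_of_aeval_eq_zero {a l : ι → C} {t : R} {d : ℕ} {p : MvPolynomial ι C}
    (hp : p.IsHomogeneous d) (hl : IsUnit (eval l p))
    (ht : aeval (fun i => algebraMap C R (a i) + l i • t) p = 0) : IsIntegral C t := by
  let g : ι → Polynomial C := fun i => Polynomial.C (a i) + Polynomial.C (l i) * Polynomial.X
  have natDegree_g : ∀ i, (g i).natDegree ≤ 1 := fun i => by simp only [g]; compute_degree
  have natDegree_le : (aeval g p).natDegree ≤ d :=
    (aeval_natDegree_le p hp.totalDegree_le g natDegree_g).trans_eq (mul_one d)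
  have coeff_eq : (aeval g p).coeff d = eval l p := by
    rw [coeff_aeval_of_natDegree_le_one natDegree_g hp]
    simp [g]
  obtain ⟨u, hu⟩ := hl.exists_left_inv
  refine ⟨Polynomial.C u * aeval g p, ?_, ?_⟩
  · refine Polynomial.monic_of_natDegree_le_of_coeff_eq_one d
      ((Polynomial.natDegree_C_mul_le _ _).trans natDegree_le) ?_
    rw [Polynomial.coeff_C_mul, coeff_eq, hu]
  · have aeval_eq : Polynomial.aeval t (aeval g p) = 0 := by
      rw [← ht, ← AlgHom.comp_apply, comp_aeval]
      simp [g, Algebra.smul_def]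
    rw [← Polynomial.aeval_def, map_mul, aeval_eq, mul_zero]

theorem exists_homogeneous_relation {𝕜 : Type*} [Field 𝕜] [CharZero 𝕜] [Algebra 𝕜 R]
    {σ : R ≃ₐ[𝕜] R} {v : ι → R} (hv : ∀ i, v i ∈ degreePart σ 1)
    (h : ¬AlgebraicIndependent 𝕜 v) :
    ∃ (d : ℕ) (p : MvPolynomial ι 𝕜), p.IsHomogeneous d ∧ p ≠ 0 ∧ aeval v p = 0 := by
  rw [algebraicIndependent_iff] at h
  push Not at h
  obtain ⟨p, hp, hp0⟩ := h
  obtain ⟨d, hd⟩ : ∃ d, homogeneousComponent d p ≠ 0 := by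
    by_contra! hzero
    rw [← sum_homogeneousComponent p] at hp0
    exact hp0 (sum_eq_zero fun j _ => hzero j)
  exact ⟨d, _, homogeneousComponent_isHomogeneous d p, hd,
    aeval_homogeneousComponent_eq_zero hv hp d⟩

theorem exists_eval_ne_zero_and_ne_zero {𝕜 : Type*} [Field 𝕜] [Infinite 𝕜] {p : MvPolynomial ι 𝕜}
    (hp : p ≠ 0) (i : ι) : ∃ l : ι → 𝕜, eval l p ≠ 0 ∧ l i ≠ 0 := by
  by_contra! h
  refine mul_ne_zero hp (X_ne_zero i) (MvPolynomial.funext fun l => ?_)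
  rw [map_mul, eval_X, map_zero, mul_eq_zero, or_iff_not_imp_left]
  exact h l

theorem isIntegral_of_isIntegral_sub_smul {𝕜 A : Type*} [Field 𝕜] [CommRing A] [Algebra 𝕜 A]
    [Algebra A R] [Algebra 𝕜 R] [IsScalarTower 𝕜 A R] {v : ι → R} {l : ι → 𝕜} {t : R}
    (h : ∀ i, IsIntegral A (v i - l i • t)) {d : ℕ} {p : MvPolynomial ι 𝕜} (hp : p.IsHomogeneous d)
    (hl : eval l p ≠ 0) (hv : aeval v p = 0) : IsIntegral A t := by
  let C := integralClosure A R
  refine isIntegral_trans (A := C) t (isIntegral_of_aeval_eq_zero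
    (a := fun i => ⟨v i - l i • t, h i⟩) (l := algebraMap 𝕜 C ∘ l)
    (p := map (algebraMap 𝕜 C) p) (hp.map _) ?_ ?_)
  · rw [← map_eval]
    exact hl.isUnit.map _
  · rw [aeval_map_algebraMap, ← hv]
    congr 2
    ext i
    rw [Function.comp_apply, algebraMap_smul, Subalgebra.algebraMap_apply, sub_add_cancel]

theorem exists_algebraicIndependent_isIntegral {𝕜 : Type*} [Field 𝕜] [CharZero 𝕜]
    [Nontrivial R] [Algebra 𝕜 R] {σ : R ≃ₐ[𝕜] R} {r : ℕ} (v : Fin r → R)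
    (hv : ∀ i, v i ∈ degreePart σ 1) :
    ∃ (s : ℕ) (w : Fin s → R), (∀ i, w i ∈ degreePart σ 1) ∧ AlgebraicIndependent 𝕜 w ∧
      ∀ i, (aeval w : MvPolynomial (Fin s) 𝕜 →ₐ[𝕜] R).toRingHom.IsIntegralElem (v i) := by
  induction r with
  | zero => exact ⟨0, v, hv, algebraicIndependent_empty_type, fun i => i.elim0⟩
  | succ r ih =>
    by_cases hind : AlgebraicIndependent 𝕜 v
    · refine ⟨r + 1, v, hv, hind, fun i => ?_⟩
      have isIntegralElem_aeval_X := (aeval (R := 𝕜) v).toRingHom.isIntegralElem_map (x := X i)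
      rwa [AlgHom.toRingHom_eq_coe, RingHom.coe_coe, aeval_X] at isIntegralElem_aeval_X
    obtain ⟨d, p, hp, hp0, hpv⟩ := exists_homogeneous_relation hv hind
    obtain ⟨l, hl, hlast⟩ := exists_eval_ne_zero_and_ne_zero hp0 (Fin.last r)
    let t : R := (l (Fin.last r))⁻¹ • v (Fin.last r)
    have ht : t ∈ degreePart σ 1 := Submodule.smul_mem _ _ (hv _)
    obtain ⟨s, w, hw, hwind, hwint⟩ := ih (fun i => v i.castSucc - l i.castSucc • t) fun i =>
      Submodule.sub_mem _ (hv _) (Submodule.smul_mem _ _ ht)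
    refine ⟨s, w, hw, hwind, fun i => ?_⟩
    let : Algebra (MvPolynomial (Fin s) 𝕜) R := (aeval w).toRingHom.toAlgebra
    have : IsScalarTower 𝕜 (MvPolynomial (Fin s) 𝕜) R :=
      .of_algebraMap_eq' (aeval w).comp_algebraMap.symm
    have isIntegral_sub : ∀ i, IsIntegral (MvPolynomial (Fin s) 𝕜) (v i - l i • t) :=
      Fin.lastCases (by simp [t, smul_inv_smul₀ hlast, isIntegral_zero]) hwint
    have isIntegral_t := isIntegral_of_isIntegral_sub_smul isIntegral_sub hp hl hpv
    rw [← sub_add_cancel (v i) (l i • t)]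
    exact (isIntegral_sub i).add (isIntegral_t.smul _)

end Noether

section FractionField

variable {𝕜 A K R L : Type*} [Field 𝕜] [CommRing A] [Field K] [CommRing R] [Field L]

theorem exists_adjoin_sum_smul_eq_top [Infinite 𝕜] [Algebra K L] [Algebra 𝕜 K] [Algebra 𝕜 L]
    [IsScalarTower 𝕜 K L] [FiniteDimensional K L] [Algebra.IsSeparable K L] {ι : Type*} [Fintype ι]
    {y : ι → L} (hy : IntermediateField.adjoin K (Set.range y) = ⊤) :
    ∃ l : ι → 𝕜, IntermediateField.adjoin K {∑ i, l i • y i} = ⊤ := by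
  have : Finite (IntermediateField K L) :=
    Field.finite_intermediateField_of_exists_primitive_element K L
      (Field.exists_primitive_element K L)
  let V (F : IntermediateField K L) : Subspace 𝕜 (ι → 𝕜) :=
    (F.toSubalgebra.toSubmodule.restrictScalars 𝕜).comap (Fintype.linearCombination 𝕜 y)
  have mem_V : ∀ F l, l ∈ V F ↔ ∑ i, l i • y i ∈ F := fun F l => by
    simp [V, Fintype.linearCombination_apply]
  have eq_top_of_V_eq_top : ∀ F, V F = ⊤ → F = ⊤ := fun F hF => by
    classical
    refine top_le_iff.1 (hy ▸ IntermediateField.adjoin_le_iff.2 ?_)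
    rintro _ ⟨i, rfl⟩
    simpa [Pi.single_apply] using (mem_V F (Pi.single i 1)).1 (hF ▸ Submodule.mem_top)
  by_contra! hne
  obtain ⟨F, hF⟩ := Subspace.exists_eq_top_of_iUnion_eq_univ
    (p := fun F : {F : IntermediateField K L // F ≠ ⊤} => V F) <|
    Set.eq_univ_of_forall fun l => Set.mem_iUnion.2
      ⟨⟨_, hne l⟩, (mem_V _ l).2 (IntermediateField.mem_adjoin_simple_self K _)⟩
  exact F.2 (eq_top_of_V_eq_top F hF)

theorem adjoin_range_algebraMap_eq_top [Algebra 𝕜 R] [Algebra R L] [IsFractionRing R L]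
    [Algebra K L] [Algebra 𝕜 K] [Algebra 𝕜 L] [IsScalarTower 𝕜 R L] [IsScalarTower 𝕜 K L]
    {ι : Type*} {v : ι → R} (hv : Algebra.adjoin 𝕜 (Set.range v) = ⊤) :
    IntermediateField.adjoin K (Set.range fun i => algebraMap R L (v i)) = ⊤ := by
  let F := IntermediateField.adjoin K (Set.range fun i => algebraMap R L (v i))
  have le_comap : Algebra.adjoin 𝕜 (Set.range v) ≤
      (F.toSubalgebra.restrictScalars 𝕜).comap (IsScalarTower.toAlgHom 𝕜 R L) := by
    rw [Algebra.adjoin_le_iff]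
    rintro _ ⟨i, rfl⟩
    exact IntermediateField.subset_adjoin K _ ⟨i, rfl⟩
  have algebraMap_mem : ∀ x, algebraMap R L x ∈ F := fun x => le_comap (hv ▸ Algebra.mem_top)
  refine eq_top_iff.2 fun z _ => ?_
  obtain ⟨x, y, _, rfl⟩ := IsFractionRing.div_surjective (A := R) z
  exact F.div_mem (algebraMap_mem x) (algebraMap_mem y)

theorem exists_basis_pow [Infinite 𝕜] [Algebra 𝕜 R] [Algebra R L] [IsFractionRing R L]
    [Algebra K L] [Algebra.IsSeparable K L] [Algebra 𝕜 K] [Algebra 𝕜 L] [IsScalarTower 𝕜 R L]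
    [IsScalarTower 𝕜 K L] {σ : R ≃ₐ[𝕜] R} {ι : Type*} [Finite ι]
    {v : ι → R} (hv : ∀ i, v i ∈ degreePart σ 1) (htop : Algebra.adjoin 𝕜 (Set.range v) = ⊤) :
    ∃ (ρ : ℕ) (b : Module.Basis (Fin ρ) K L) (u : R), 0 < ρ ∧ u ∈ degreePart σ 1 ∧
      ∀ j, b j = algebraMap R L (u ^ (j : ℕ)) := by
  cases nonempty_fintype ι
  have hadj : IntermediateField.adjoin K (Set.range fun i => algebraMap R L (v i)) = ⊤ :=
    adjoin_range_algebraMap_eq_top htop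
  have : FiniteDimensional K L := by
    have finite_adjoin := IntermediateField.finiteDimensional_adjoin
      (S := Set.range fun i => algebraMap R L (v i)) fun x _ =>
        Algebra.IsIntegral.isIntegral (R := K) x
    rw [hadj] at finite_adjoin
    exact Module.Finite.equiv (IntermediateField.topEquiv (F := K) (E := L)).toLinearEquiv
  obtain ⟨l, hl⟩ := exists_adjoin_sum_smul_eq_top (𝕜 := 𝕜) hadj
  let pb := PowerBasis.ofAdjoinEqTop (Algebra.IsIntegral.isIntegral _)
    (IntermediateField.adjoin_eq_top_iff.1 hl)
  refine ⟨pb.dim, pb.basis, ∑ i, l i • v i, pb.finrank ▸ Module.finrank_pos,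
    Submodule.sum_mem _ fun i _ => Submodule.smul_mem _ _ (hv i), fun j => ?_⟩
  rw [pb.basis_eq_pow, PowerBasis.ofAdjoinEqTop_gen, map_pow, map_sum]
  congr! 2 with i
  exact (algebraMap.coe_smul ..).symm

variable [Algebra A R] [Algebra A K] [IsFractionRing A K] [Algebra R L] [IsFractionRing R L]
  [Algebra A L] [IsScalarTower A R L] [Algebra K L] [IsScalarTower A K L]

theorem trace_algebraMap_ringEquiv {τ : A ≃+* A} {σ : R ≃+* R}
    (h : ∀ a, σ (algebraMap A R a) = algebraMap A R (τ a)) (x : R) :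
    Algebra.trace K L (algebraMap R L (σ x)) =
      IsFractionRing.ringEquivOfRingEquiv τ (Algebra.trace K L (algebraMap R L x)) := by
  let eK : K ≃+* K := IsFractionRing.ringEquivOfRingEquiv τ
  let eL : L ≃+* L := IsFractionRing.ringEquivOfRingEquiv σ
  have hcomp : (algebraMap K L).comp (eK : K →+* K) = (eL : L →+* L).comp (algebraMap K L) := by
    refine IsLocalization.ringHom_ext (nonZeroDivisors A) (RingHom.ext fun a => ?_)
    simp only [RingHom.comp_apply, RingEquiv.coe_toRingHom, eK, eL,
      IsFractionRing.ringEquivOfRingEquiv_algebraMap, ← IsScalarTower.algebraMap_apply]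
    rw [IsScalarTower.algebraMap_apply A R L, IsScalarTower.algebraMap_apply A R L,
      IsFractionRing.ringEquivOfRingEquiv_algebraMap, h]
  have trace_eq := Algebra.trace_eq_of_equiv_equiv eK eL hcomp (algebraMap R L x)
  rw [eq_comm, RingEquiv.symm_apply_eq] at trace_eq
  rwa [IsFractionRing.ringEquivOfRingEquiv_algebraMap] at trace_eq

theorem exists_mem_degreePart_algebraMap_eq_trace [IsIntegrallyClosed A] [Algebra.IsIntegral A R]
    [FiniteDimensional K L] [Algebra 𝕜 A] [Algebra 𝕜 R] [Algebra 𝕜 K] [Algebra 𝕜 L]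
    [IsScalarTower 𝕜 A K] [IsScalarTower 𝕜 R L] [IsScalarTower 𝕜 K L] {τ : A ≃ₐ[𝕜] A}
    {σ : R ≃ₐ[𝕜] R} (h : ∀ a, σ (algebraMap A R a) = algebraMap A R (τ a)) {d : ℕ} {x : R}
    (hx : x ∈ degreePart σ d) :
    ∃ a ∈ degreePart τ d, algebraMap A K a = Algebra.trace K L (algebraMap R L x) := by
  obtain ⟨a, ha⟩ : ∃ a, algebraMap A K a = Algebra.trace K L (algebraMap R L x) :=
    IsIntegrallyClosed.isIntegral_iff.1 <|
      Algebra.isIntegral_trace (Algebra.IsIntegral.isIntegral (R := A) x).algebraMap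
  have trace_eq : Algebra.trace K L (algebraMap R L (σ x)) = algebraMap A K (τ a) := by
    refine (trace_algebraMap_ringEquiv (τ := τ.toRingEquiv) (σ := σ.toRingEquiv) h x).trans ?_
    rw [← ha]
    exact IsFractionRing.ringEquivOfRingEquiv_algebraMap ..
  refine ⟨a, mem_degreePart.2 (IsFractionRing.injective A K ?_), ha⟩
  calc algebraMap A K (τ a) = Algebra.trace K L (algebraMap R L ((2 : 𝕜) ^ d • x)) := by
        rw [← trace_eq, mem_degreePart.1 hx]
    _ = (2 : 𝕜) ^ d • algebraMap A K a := by
        rw [ha, ← LinearMap.map_smul_of_tower]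
        exact congrArg _ (algebraMap.coe_smul ..)
    _ = algebraMap A K ((2 : 𝕜) ^ d • a) := (algebraMap.coe_smul ..).symm

theorem eq_zero_of_trace_mul_basis_eq_zero [FiniteDimensional K L] [Algebra.IsSeparable K L]
    {ι : Type*} (b : Module.Basis ι K L) {x : L} (h : ∀ j, Algebra.trace K L (x * b j) = 0) :
    x = 0 := by
  refine (traceForm_nondegenerate K L).1 x fun z => ?_
  rw [show Algebra.traceForm K L x = 0 from b.ext h, LinearMap.zero_apply]

end FractionField

section Rank

variable {𝕜 A R : Type*} [Field 𝕜] [CommRing A] [CommRing R] [Algebra 𝕜 A] [Algebra 𝕜 R]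
  [Algebra A R] {τ : A ≃ₐ[𝕜] A} {σ : R ≃ₐ[𝕜] R}
  (h : ∀ a, σ (algebraMap A R a) = algebraMap A R (τ a))

include h in
theorem algebraMap_mem_degreePart [IsScalarTower 𝕜 A R] {d : ℕ} {a : A}
    (ha : a ∈ degreePart τ d) : algebraMap A R a ∈ degreePart σ d := by
  rw [mem_degreePart, h, mem_degreePart.1 ha]
  exact algebraMap.coe_smul ..

variable {K L : Type*} [Field K] [Field L] [Algebra A K] [IsFractionRing A K] [Algebra R L]
  [Algebra A L] [IsScalarTower A R L] [Algebra K L] [IsScalarTower A K L] {ι : Type*} [Fintype ι]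
  (b : Module.Basis ι K L) {y : ι → R} {β : ι → ℕ} (hy : ∀ j, y j ∈ degreePart σ (β j))
  (hb : ∀ j, b j = algebraMap R L (y j)) (m : ℕ) [∀ d, Module.Finite 𝕜 (degreePart τ d)]

include h hy hb in
theorem le_finrank_degreePart [IsScalarTower 𝕜 A R] [Module.Finite 𝕜 (degreePart σ m)]
    (hm : ∀ j, β j ≤ m) :
    ∑ j, Module.finrank 𝕜 (degreePart τ (m - β j)) ≤ Module.finrank 𝕜 (degreePart σ m) := by
  let T : (∀ j, degreePart τ (m - β j)) →ₗ[𝕜] R := ∑ j, LinearMap.mulRight 𝕜 (y j) ∘ₗ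
    (IsScalarTower.toAlgHom 𝕜 A R).toLinearMap ∘ₗ Submodule.subtype _ ∘ₗ LinearMap.proj j
  have T_apply : ∀ f, T f = ∑ j, algebraMap A R (f j) * y j := fun f => by
    simp only [T, LinearMap.sum_apply]
    rfl
  have T_mem : ∀ f, T f ∈ degreePart σ m := fun f => by
    rw [T_apply]
    refine Submodule.sum_mem _ fun j _ => ?_
    have mul_mem := mul_mem_degreePart (algebraMap_mem_degreePart h (f j).2) (hy j)
    rwa [Nat.sub_add_cancel (hm j)] at mul_mem
  have T_injective : Function.Injective (T.codRestrict _ T_mem) := by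
    refine (injective_iff_map_eq_zero _).2 fun f hf => funext fun j => Subtype.ext ?_
    have sum_eq_zero : ∑ j, algebraMap A K (f j) • b j = 0 := by
      have T_eq_zero : T f = 0 := congrArg Subtype.val hf
      rw [T_apply] at T_eq_zero
      rw [← map_zero (algebraMap R L), ← T_eq_zero, map_sum]
      refine sum_congr rfl fun j _ => ?_
      rw [map_mul, hb, Algebra.smul_def, ← IsScalarTower.algebraMap_apply,
        ← IsScalarTower.algebraMap_apply]
    exact (map_eq_zero_iff _ (IsFractionRing.injective A K)).1
      (Fintype.linearIndependent_iff.1 b.linearIndependent _ sum_eq_zero j)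
  rw [← Module.finrank_pi_fintype 𝕜]
  exact LinearMap.finrank_le_finrank_of_injective T_injective

include h hy hb in
theorem finrank_degreePart_le [Algebra 𝕜 K] [Algebra 𝕜 L] [IsScalarTower 𝕜 A K]
    [IsScalarTower 𝕜 R L] [IsScalarTower 𝕜 K L] [IsFractionRing R L] [IsIntegrallyClosed A]
    [Algebra.IsIntegral A R] [Algebra.IsSeparable K L] :
    Module.finrank 𝕜 (degreePart σ m) ≤ ∑ j, Module.finrank 𝕜 (degreePart τ (m + β j)) := by
  have : FiniteDimensional K L := .of_basis b
  let W (j : ι) : Submodule 𝕜 K :=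
    (degreePart τ (m + β j)).map (IsScalarTower.toAlgHom 𝕜 A K).toLinearMap
  let T (j : ι) : degreePart σ m →ₗ[𝕜] K := (Algebra.trace K L).restrictScalars 𝕜 ∘ₗ
    (IsScalarTower.toAlgHom 𝕜 R L).toLinearMap ∘ₗ LinearMap.mulRight 𝕜 (y j) ∘ₗ Submodule.subtype _
  have T_apply : ∀ j x, T j x = Algebra.trace K L (algebraMap R L (x * y j)) := fun _ _ => rfl
  have T_mem : ∀ j x, T j x ∈ W j := fun j x =>
    exists_mem_degreePart_algebraMap_eq_trace h (mul_mem_degreePart x.2 (hy j))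
  let F : degreePart σ m →ₗ[𝕜] ∀ j, W j := .pi fun j => (T j).codRestrict (W j) (T_mem j)
  have F_injective : Function.Injective F := by
    refine (injective_iff_map_eq_zero F).2 fun x hx => Subtype.ext ?_
    refine (map_eq_zero_iff _ (IsFractionRing.injective R L)).1
      (eq_zero_of_trace_mul_basis_eq_zero b fun j => ?_)
    rw [hb, ← map_mul, ← T_apply]
    exact congrArg Subtype.val (congrFun hx j)
  calc Module.finrank 𝕜 (degreePart σ m) ≤ Module.finrank 𝕜 (∀ j, W j) :=
        LinearMap.finrank_le_finrank_of_injective F_injective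
    _ = ∑ j, Module.finrank 𝕜 (W j) := Module.finrank_pi_fintype 𝕜
    _ ≤ ∑ j, Module.finrank 𝕜 (degreePart τ (m + β j)) :=
        sum_le_sum fun j _ => Submodule.finrank_map_le _ _

end Rank

section Bounds

open MvPolynomial

variable {𝕜 R : Type*} [Field 𝕜] [CommRing R] [Algebra 𝕜 R]

theorem isIntegral_aeval {ι κ : Type*} {w : κ → R} {v : ι → R}
    (hint : ∀ i, (aeval w : MvPolynomial κ 𝕜 →ₐ[𝕜] R).toRingHom.IsIntegralElem (v i))
    (htop : Algebra.adjoin 𝕜 (Set.range v) = ⊤) :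
    (aeval w : MvPolynomial κ 𝕜 →ₐ[𝕜] R).toRingHom.IsIntegral := fun x => by
  let : Algebra (MvPolynomial κ 𝕜) R := (aeval w).toRingHom.toAlgebra
  have : IsScalarTower 𝕜 (MvPolynomial κ 𝕜) R := .of_algebraMap_eq' (aeval w).comp_algebraMap.symm
  have le_integralClosure : Algebra.adjoin 𝕜 (Set.range v) ≤
      (integralClosure (MvPolynomial κ 𝕜) R).restrictScalars 𝕜 :=
    Algebra.adjoin_le (Set.range_subset_iff.2 hint)
  exact le_integralClosure (htop ▸ Algebra.mem_top)

variable [CharZero 𝕜] {σ : R ≃ₐ[𝕜] R}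

theorem finite_degreePart {ι : Type*} [Finite ι] {v : ι → R} (hv : ∀ i, v i ∈ degreePart σ 1)
    (hsurj : Function.Surjective (aeval v : MvPolynomial ι 𝕜 → R)) (m : ℕ) :
    Module.Finite 𝕜 (degreePart σ m) := by
  rw [degreePart_eq_map hv hsurj]
  infer_instance

theorem finrank_degreePart_scale (ι : Type*) [Fintype ι] (m : ℕ) :
    Module.finrank 𝕜 (degreePart (scale 𝕜 ι) m) = Nat.multichoose (Fintype.card ι) m := by
  rw [degreePart_scale, finrank_homogeneousSubmodule]

theorem aeval_scale {ι : Type*} {w : ι → R} (hw : ∀ i, w i ∈ degreePart σ 1)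
    (p : MvPolynomial ι 𝕜) : aeval w (scale 𝕜 ι p) = σ (aeval w p) := by
  have comp_eq : (aeval w).comp (scale 𝕜 ι : MvPolynomial ι 𝕜 →ₐ[𝕜] MvPolynomial ι 𝕜) =
      (σ : R →ₐ[𝕜] R).comp (aeval w) := by
    ext i
    simpa [scale_X] using (mem_degreePart_one.1 (hw i)).symm
  exact DFunLike.congr_fun comp_eq p

theorem exists_multichoose_bounds [IsDomain R] {k : ℕ} {v : Fin k → R}
    (hv : ∀ i, v i ∈ degreePart σ 1)
    (hsurj : Function.Surjective (aeval v : MvPolynomial (Fin k) 𝕜 → R)) :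
    ∃ s, ∃ ρ > 0,
      (∀ m, Module.finrank 𝕜 (degreePart σ m) ≤ ∑ j ∈ range ρ, Nat.multichoose s (m + j)) ∧
      ∀ m ≥ ρ, ∑ j ∈ range ρ, Nat.multichoose s (m - j) ≤ Module.finrank 𝕜 (degreePart σ m) := by
  have htop : Algebra.adjoin 𝕜 (Set.range v) = ⊤ := by
    rw [Algebra.adjoin_range_eq_range_aeval, (AlgHom.range_eq_top _).2 hsurj]
  obtain ⟨s, w, hw, hind, hint⟩ := exists_algebraicIndependent_isIntegral v hv
  let : Algebra (MvPolynomial (Fin s) 𝕜) R := (aeval w).toRingHom.toAlgebra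
  have : IsScalarTower 𝕜 (MvPolynomial (Fin s) 𝕜) R :=
    .of_algebraMap_eq' (aeval w).comp_algebraMap.symm
  have : FaithfulSMul (MvPolynomial (Fin s) 𝕜) R :=
    (faithfulSMul_iff_algebraMap_injective _ R).2 hind
  have : Algebra.IsIntegral (MvPolynomial (Fin s) 𝕜) R := ⟨isIntegral_aeval hint htop⟩
  let K := FractionRing (MvPolynomial (Fin s) 𝕜)
  let L := FractionRing R
  let : Algebra K L := FractionRing.liftAlgebra _ L
  have : IsScalarTower (MvPolynomial (Fin s) 𝕜) K L := FractionRing.isScalarTower_liftAlgebra _ L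
  have : IsScalarTower 𝕜 K L := .to₁₃₄ 𝕜 (MvPolynomial (Fin s) 𝕜) K L
  have (d : ℕ) : Module.Finite 𝕜 (degreePart (scale 𝕜 (Fin s)) d) := by
    rw [degreePart_scale]
    infer_instance
  have := finite_degreePart hv hsurj
  have map_scale (p : MvPolynomial (Fin s) 𝕜) : σ (algebraMap _ R p) =
      algebraMap _ R (scale 𝕜 _ p) := (aeval_scale hw p).symm
  have finrank_scale (d : ℕ) := finrank_degreePart_scale (𝕜 := 𝕜) (Fin s) d
  simp only [Fintype.card_fin] at finrank_scale
  obtain ⟨ρ, b, u, hρ, hu, hb⟩ := exists_basis_pow (K := K) (L := L) hv htop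
  have pow_mem (j : Fin ρ) : u ^ (j : ℕ) ∈ degreePart σ j := pow_mem_degreePart hu j
  refine ⟨s, ρ, hρ, fun m => ?_, fun m hm => ?_⟩
  · rw [sum_range]
    exact (finrank_degreePart_le map_scale b pow_mem hb m).trans_eq
      (sum_congr rfl fun j _ => finrank_scale _)
  · rw [sum_range]
    exact (sum_congr rfl fun j _ => finrank_scale _).symm.trans_le
      (le_finrank_degreePart map_scale b pow_mem hb m fun j => j.2.le.trans hm)

end Bounds

section UpperBound

open MvPolynomial

theorem growth_of_multichoose_bounds {f : ℕ → ℕ} {s ρ : ℕ}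
    (hle : ∀ m, f m ≤ ∑ j ∈ range ρ, Nat.multichoose (s + 1) (m + j))
    (hge : ∀ m ≥ ρ, ∑ j ∈ range ρ, Nat.multichoose (s + 1) (m - j) ≤ f m) :
    HasGrowth (fun m => (f m : ℝ)) s ρ := by
  have sum_one : (ρ : ℝ) = ∑ j ∈ range ρ, 1 := by simp
  rw [sum_one]
  refine .of_le_of_le (.sum fun j _ => (hasGrowth_multichoose_succ s).comp_sub j)
    (.sum fun j _ => (hasGrowth_multichoose_succ s).comp_add j) ?_ (.of_forall fun m => ?_)
  · filter_upwards [eventually_ge_atTop ρ] with m hm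
    exact_mod_cast hge m hm
  · exact_mod_cast hle m

theorem le_mul_multichoose_of_hasGrowth {f : ℕ → ℕ} {s ρ n Δ : ℕ} (hρ : 0 < ρ)
    (hle : ∀ m, f m ≤ ∑ j ∈ range ρ, Nat.multichoose s (m + j))
    (hge : ∀ m ≥ ρ, ∑ j ∈ range ρ, Nat.multichoose s (m - j) ≤ f m) (hΔ : 0 < Δ)
    (hf : HasGrowth (fun m => (f m : ℝ)) n Δ) (m : ℕ) :
    f m ≤ Δ * Nat.multichoose (n + 1) (m + (Δ - 1)) := by
  have hΔ' : (Δ : ℝ) ≠ 0 := by positivity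
  cases s with
  | zero =>
    have eventually_zero : (fun m => (f m : ℝ)) =ᶠ[atTop] fun _ => 0 := by
      filter_upwards [eventually_gt_atTop 0] with l hl
      obtain ⟨l, rfl⟩ := Nat.exists_eq_add_of_le' hl
      simpa [add_right_comm l 1] using hle (l + 1)
    refine absurd (tendsto_nhds_unique hf ?_) hΔ'
    exact HasGrowth.congr' eventually_zero.symm (by simp [HasGrowth])
  | succ s =>
    obtain ⟨rfl, hρΔ⟩ := (growth_of_multichoose_bounds hle hge).eq_of_ne_zero hf
      (by positivity) hΔ'
    obtain rfl : ρ = Δ := by exact_mod_cast hρΔ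
    refine (hle m).trans ((sum_le_card_nsmul _ _ _ fun j hj =>
      multichoose_succ_right_mono s ?_).trans_eq (by rw [card_range, smul_eq_mul]))
    have := mem_range.1 hj
    omega

variable {k : ℕ} {I : Ideal (MvPolynomial (Fin k) ℂ)}
  (hI : ∀ p ∈ I, ∀ j : ℕ, homogeneousComponent j p ∈ I)

/-- The automorphism of the homogeneous coordinate ring that doubles every coordinate; its
`degreePart`s are the graded pieces. -/
noncomputable def quotientScale : (MvPolynomial (Fin k) ℂ ⧸ I) ≃ₐ[ℂ] (MvPolynomial (Fin k) ℂ ⧸ I) :=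
  Ideal.quotientEquivAlg I I (scale ℂ (Fin k)) (map_scale_eq hI).symm

theorem mk_X_mem_degreePart (i : Fin k) :
    Ideal.Quotient.mk I (X i) ∈ degreePart (quotientScale hI) 1 := by
  rw [mem_degreePart_one, quotientScale, Ideal.quotientEquivAlg_mk, scale_X]
  rfl

variable (I) in
theorem aeval_mk_X_eq_mkₐ :
    aeval (fun i => Ideal.Quotient.mk I (X i)) = Ideal.Quotient.mkₐ ℂ I := by
  ext i
  simp

variable (I) in
theorem aeval_mk_X_surjective : Function.Surjective
    (aeval fun i => Ideal.Quotient.mk I (X i) :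
      MvPolynomial (Fin k) ℂ → MvPolynomial (Fin k) ℂ ⧸ I) := by
  rw [aeval_mk_X_eq_mkₐ]
  exact Ideal.Quotient.mkₐ_surjective ℂ I

theorem hilbertFn_eq_finrank_degreePart (m : ℕ) :
    hilbertFn I m = Module.finrank ℂ (degreePart (quotientScale hI) m) := by
  rw [degreePart_eq_map (mk_X_mem_degreePart hI) (aeval_mk_X_surjective I), aeval_mk_X_eq_mkₐ,
    hilbertFn, ← (Submodule.Quotient.restrictScalarsEquiv ℂ I).finrank_map_eq, gradedPiece,
    ← Submodule.map_comp]
  rfl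

include hI in
theorem hilbertFn_le_mul_multichoose [I.IsPrime] {n Δ : ℕ} (hΔ : 0 < Δ)
    (hH : HasGrowth (fun m => (hilbertFn I m : ℝ)) n Δ) (m : ℕ) :
    hilbertFn I m ≤ Δ * Nat.multichoose (n + 1) (m + (Δ - 1)) := by
  obtain ⟨s, ρ, hρ, hle, hge⟩ :=
    exists_multichoose_bounds (mk_X_mem_degreePart hI) (aeval_mk_X_surjective I)
  simp only [← hilbertFn_eq_finrank_degreePart hI] at hle hge
  exact le_mul_multichoose_of_hasGrowth hρ hle hge hΔ hH m

end UpperBound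

section FinalEstimate

theorem sub_mul_multichoose_shift_le (n : ℕ) {Δ : ℕ} (hΔ : 0 < Δ) (m : ℕ) :
    ((m : ℝ) - n * Δ) * Nat.multichoose (n + 1) (m + (Δ - 1)) ≤
      m * Nat.multichoose (n + 1) m := by
  obtain ⟨δ, rfl⟩ := Nat.exists_eq_add_of_le' hΔ
  have shift : ((m + δ) * Nat.multichoose (n + 1) (m + δ) : ℝ) ≤
      (m + δ) * Nat.multichoose (n + 1) m + δ * n * Nat.multichoose (n + 1) (m + δ) := by
    have := mul_multichoose_succ_le_shift n (Nat.le_add_left δ m)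
    rw [Nat.add_sub_cancel] at this
    exact_mod_cast this
  have mono : (Nat.multichoose (n + 1) m : ℝ) ≤ Nat.multichoose (n + 1) (m + δ) :=
    mod_cast multichoose_succ_right_mono n (Nat.le_add_right m δ)
  have mul_mono : (δ * Nat.multichoose (n + 1) m : ℝ) ≤ δ * Nat.multichoose (n + 1) (m + δ) := by
    gcongr
  have : (0 : ℝ) ≤ n * Nat.multichoose (n + 1) (m + δ) := by positivity
  rw [Nat.add_sub_cancel]
  push_cast
  linarith

theorem mul_sub_le_sub_mul {m n Δ E C : ℝ} (hm : 0 ≤ m) (hn : 0 ≤ n) (hΔ : 0 ≤ Δ) (hC : 0 ≤ C)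
    (hE : E ≤ C) :
    m * (m * E - (2 * n + 1) * Δ * C) ≤ (m - n * Δ) * (m * E - (2 * n + 1) * Δ * C / 2) := by
  have : n * Δ * m * E ≤ n * Δ * m * C := by gcongr
  have : 0 ≤ n * Δ * ((2 * n + 1) * Δ * C / 2) := by positivity
  have : 0 ≤ m * Δ * C / 2 := by positivity
  linarith

theorem mul_sub_le_of_multichoose_bounds {n Δ m : ℕ} (hΔ : 0 < Δ) (hm : 0 < m) {H S E C : ℝ}
    (hH0 : 0 ≤ H) (hC : 0 ≤ C) (hE : E ≤ C)
    (hH : H ≤ Δ * Nat.multichoose (n + 1) (m + (Δ - 1))) (hS0 : 0 ≤ S)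
    (hS : Δ ≤ m → Δ * Nat.multichoose (n + 1) m * (m * E - (2 * n + 1) * Δ * C / 2) ≤ S) :
    H * (m * E - (2 * n + 1) * Δ * C) ≤ S := by
  have hκC : 0 ≤ (2 * n + 1) * Δ * C := by positivity
  obtain hle | hlt := le_or_gt (m * E - (2 * n + 1) * Δ * C) 0
  · exact (mul_nonpos_of_nonneg_of_nonpos hH0 hle).trans hS0
  have hm' : (0 : ℝ) < m := by positivity
  have hΔm : (Δ : ℝ) ≤ m := by
    have : m * E ≤ m * C := by gcongr
    have : 0 ≤ n * Δ * C := by positivity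
    exact (lt_of_mul_lt_mul_right (by linarith) hC : (Δ : ℝ) < m).le
  have half_nonneg : 0 ≤ m * E - (2 * n + 1) * Δ * C / 2 := by linarith
  refine le_of_mul_le_mul_left ?_ hm'
  calc m * (H * (m * E - (2 * n + 1) * Δ * C))
      ≤ m * (Δ * Nat.multichoose (n + 1) (m + (Δ - 1)) * (m * E - (2 * n + 1) * Δ * C)) := by
        gcongr
    _ = Δ * Nat.multichoose (n + 1) (m + (Δ - 1)) * (m * (m * E - (2 * n + 1) * Δ * C)) := by ring
    _ ≤ Δ * Nat.multichoose (n + 1) (m + (Δ - 1)) *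
          ((m - n * Δ) * (m * E - (2 * n + 1) * Δ * C / 2)) :=
        mul_le_mul_of_nonneg_left
          (mul_sub_le_sub_mul hm'.le n.cast_nonneg Δ.cast_nonneg hC hE) (by positivity)
    _ = Δ * (m * E - (2 * n + 1) * Δ * C / 2) *
          ((m - n * Δ) * Nat.multichoose (n + 1) (m + (Δ - 1))) := by ring
    _ ≤ Δ * (m * E - (2 * n + 1) * Δ * C / 2) * (m * Nat.multichoose (n + 1) m) :=
        mul_le_mul_of_nonneg_left (sub_mul_multichoose_shift_le n hΔ m) (by positivity)
    _ = m * (Δ * Nat.multichoose (n + 1) m * (m * E - (2 * n + 1) * Δ * C / 2)) := by ring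
    _ ≤ m * S := by gcongr; exact hS (mod_cast hΔm)

end FinalEstimate

section

variable {k : ℕ}

theorem hilbertFn_pos {I : Ideal (MvPolynomial (Fin k) ℂ)} {n : ℕ} {a : ℝ} (ha : a ≠ 0)
    (hH : HasGrowth (fun m => (hilbertFn I m : ℝ)) n a) (m : ℕ) : 0 < hilbertFn I m := by
  simp only [hilbertFn_eq_card I 0] at hH ⊢
  exact card_pos.2 (degreeSlice_nonempty isLowerSet_standardExponents ha hH m)

theorem hilbertWeight_nonneg (I : Ideal (MvPolynomial (Fin k) ℂ)) (m : ℕ) {c : Fin k → ℝ}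
    (hc : ∀ i, 0 ≤ c i) : 0 ≤ hilbertWeight I m c := by
  rw [hilbertWeight_eq_sum_weight hc]
  exact sum_nonneg fun a _ => weight_nonneg hc a

variable {I : Ideal (MvPolynomial (Fin k) ℂ)} {n Δ m : ℕ} {c : Fin k → ℝ} {C e : ℝ}
  (hH : HasGrowth (fun m => (hilbertFn I m : ℝ)) n Δ) (hc : ∀ i, 0 ≤ c i)
  (hC : ∀ i, c i ≤ C) (hC0 : 0 ≤ C) (he : HasGrowth (fun m => hilbertWeight I m c) (n + 1) e)

include hH hc hC hC0 he in
theorem chowWeight_div_le (hΔ : 0 < Δ) : e / ((n + 1) * Δ) ≤ C := by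
  simp only [hilbertFn_eq_card I c] at hH
  simp only [hilbertWeight_eq_sum_weight hc] at he
  rw [div_le_iff₀' (by positivity), mul_comm ((n : ℝ) + 1), mul_assoc]
  exact le_mul_of_hasGrowth_sum_weight isLowerSet_standardExponents hH hc hC hC0 he

include hH hc hC hC0 he in
theorem mul_multichoose_mul_sub_le_hilbertWeight (hΔ : 0 < Δ) (hm : Δ ≤ m) :
    Δ * Nat.multichoose (n + 1) m * (m * (e / ((n + 1) * Δ)) - (2 * n + 1) * Δ * C / 2) ≤
      hilbertWeight I m c := by
  simp only [hilbertFn_eq_card I c] at hH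
  simp only [hilbertWeight_eq_sum_weight hc] at he ⊢
  have key := multichoose_mul_le_sum_weight isLowerSet_standardExponents hH hc hC hC0 he hm
  obtain ⟨m, rfl⟩ := Nat.exists_eq_add_of_le' (hΔ.trans_le hm)
  have absorb : ((m + 1 : ℕ) : ℝ) * Nat.multichoose (n + 1) (m + 1) =
      (n + 1) * Nat.multichoose (n + 2) m := mod_cast succ_mul_multichoose_succ (n + 1) m
  rw [Nat.add_sub_cancel] at key
  have hΔ' : (Δ : ℝ) ≠ 0 := by positivity
  have cancel : Δ * Nat.multichoose (n + 1) (m + 1) * ((m + 1 : ℕ) * (e / ((n + 1) * Δ))) =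
      Nat.multichoose (n + 2) m * e :=
    calc _ = ((m + 1 : ℕ) * Nat.multichoose (n + 1) (m + 1) : ℝ) * e / (n + 1) := by field_simp
      _ = _ := by rw [absorb]; field_simp
  rw [mul_sub, cancel]
  linarith

end

end HilbertWeight

theorem hilbert_weight_lower_bound_via_chow_weight_general
    {k : ℕ} {I : Ideal (MvPolynomial (Fin k) ℂ)}
    (hI : ∀ p ∈ I, ∀ j : ℕ, MvPolynomial.homogeneousComponent j p ∈ I) [I.IsPrime]
    {n Δ : ℕ} (hΔ : 0 < Δ)
    (hH : Tendsto (fun m : ℕ => (Nat.factorial n : ℝ) * (hilbertFn I m : ℝ) / (m : ℝ) ^ n)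
      atTop (nhds (Δ : ℝ)))
    {c : Fin k → ℝ} (hc : ∀ i, 0 ≤ c i) {e : ℝ}
    (he : Tendsto (fun m : ℕ =>
      (Nat.factorial (n + 1) : ℝ) * hilbertWeight I m c / (m : ℝ) ^ (n + 1)) atTop (nhds e))
    {m : ℕ} (hm : 0 < m) :
    (1 / (((n : ℝ) + 1) * (Δ : ℝ))) * e
        - (((2 * (n : ℝ) + 1) * (Δ : ℝ)) / (m : ℝ)) * (⨆ i, c i)
      ≤ hilbertWeight I m c / ((m : ℝ) * (hilbertFn I m : ℝ)) := by
  have hC (i) : c i ≤ ⨆ i, c i := le_ciSup (Set.finite_range c).bddAbove i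
  have hC0 : 0 ≤ ⨆ i, c i := Real.iSup_nonneg hc
  have hilbertFn_pos : 0 < hilbertFn I m :=
    HilbertWeight.hilbertFn_pos (Nat.cast_ne_zero.2 hΔ.ne') hH m
  have cleared : hilbertFn I m * (m * (e / ((n + 1) * Δ)) - (2 * n + 1) * Δ * ⨆ i, c i) ≤
      hilbertWeight I m c :=
    HilbertWeight.mul_sub_le_of_multichoose_bounds hΔ hm (Nat.cast_nonneg _) hC0
      (HilbertWeight.chowWeight_div_le hH hc hC hC0 he hΔ)
      (mod_cast HilbertWeight.hilbertFn_le_mul_multichoose hI hΔ hH m)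
      (HilbertWeight.hilbertWeight_nonneg I m hc)
      (HilbertWeight.mul_multichoose_mul_sub_le_hilbertWeight hH hc hC hC0 he hΔ)
  rw [le_div_iff₀ (by positivity)]
  refine Eq.trans_le ?_ cleared
  field_simp

/-- **Evertse–Ferretti / Mumford; Lemma 3.2 in the paper.**
Let `X ⊂ ℙ^N` be an algebraic variety of dimension `n` and degree `Δ` over `ℂ`, with
homogeneous (prime) ideal `I_X`.  Let `m > Δ` be an integer and `c⃗ ∈ ℝ^{N+1}_{≥0}`.
Then `(1/(m·H_X(m)))·S_X(m, c⃗) ≥ (1/((n+1)Δ))·e_X(c⃗) − ((2n+1)Δ/m)·max_i c_i`.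

The dimension `n` and degree `Δ` are encoded by the asymptotics
`H_X(m) = Δ·m^n/n! + O(m^{n-1})` of the Hilbert function, and the Chow weight
`e_X(c⃗)` is characterized by the asymptotics
`S_X(m, c⃗) = e_X(c⃗)·m^{n+1}/(n+1)! + O(m^n)` of the Hilbert weight. -/
theorem hilbert_weight_lower_bound_via_chow_weight
    (N : ℕ) (I : Ideal (MvPolynomial (Fin (N + 1)) ℂ))
    (hIhom : ∀ p ∈ I, ∀ j : ℕ, MvPolynomial.homogeneousComponent j p ∈ I)
    (hIprime : I.IsPrime)
    (n Δ : ℕ) (hΔ : 0 < Δ)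
    (hHilb : Tendsto (fun m : ℕ => (Nat.factorial n : ℝ) * (hilbertFn I m : ℝ) / (m : ℝ) ^ n)
      atTop (nhds (Δ : ℝ)))
    (e : (Fin (N + 1) → ℝ) → ℝ)
    (he : ∀ c : Fin (N + 1) → ℝ, (∀ i, 0 ≤ c i) →
      Tendsto (fun m : ℕ =>
        (Nat.factorial (n + 1) : ℝ) * hilbertWeight I m c / (m : ℝ) ^ (n + 1))
        atTop (nhds (e c)))
    (m : ℕ) (hm : Δ < m)
    (c : Fin (N + 1) → ℝ) (hc : ∀ i, 0 ≤ c i) :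
    (1 / (((n : ℝ) + 1) * (Δ : ℝ))) * e c
        - (((2 * (n : ℝ) + 1) * (Δ : ℝ)) / (m : ℝ)) * (⨆ i, c i)
      ≤ hilbertWeight I m c / ((m : ℝ) * (hilbertFn I m : ℝ)) :=
  hilbert_weight_lower_bound_via_chow_weight_general hIhom hΔ hHilb hc (he c hc) (hΔ.trans hm)
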